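/- arXiv:2408.03233 — 2 statements merged into one kernel-verified Lean document; each statement's English description precedes it below -/
import Mathlib

section
/- Let u be a bounded harmonic function on {x ∈ ℝ² : |x| > ρ}. Then there exist constants c₀ and c_{j,c}, c_{j,s} (j ≥ 1) such that u(r cos θ, r sin θ) = c₀ + Σ_{j=1}^∞ (c_{j,c} cos(jθ) + c_{j,s} sin(jθ)) r^{−j} for all r > ρ, with the series converging absolutely and uniformly on compact subsets of {r > ρ}. -/
open Complex Real

/-- `u` is (twice continuously differentiable and) harmonic on the set `S ⊆ ℝ²`. -/
def IsHarmonicOn (u : ℝ × ℝ → ℂ) (S : Set (ℝ × ℝ)) : Prop :=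
  ContDiffOn ℝ 2 u S ∧ ∀ x ∈ S,
    fderiv ℝ (fun y => fderiv ℝ u y (1, 0)) x (1, 0) +
      fderiv ℝ (fun y => fderiv ℝ u y (0, 1)) x (0, 1) = 0

/-!
The inversion `z ↦ 1 / z` turns a function that is harmonic for `‖z‖ > ρ` and `o(log ‖z‖)` at
infinity into one that is harmonic on a punctured disc and `o(log ‖w‖)` at the puncture. Such a
singularity `f` is removable: its holomorphic gradient `g = ∂₁f - i ∂₂f` satisfies
`w g(w) = o(1 / ‖w‖)` by the gradient estimate, so `w g(w)` extends holomorphically over the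
puncture, and integrating `g` gives `f = α log ‖w‖ + Re F` with `F` holomorphic on the whole disc;
the growth condition kills `α`. The expansion at infinity is then the real part of the Taylor series
of `F` in the variable `1 / z`.
-/

open Asymptotics Bornology Filter InnerProductSpace Metric Set Topology

/-- The gradient of a real function on the plane, encoded as the complex number `∂₁f - i ∂₂f`
(twice the Wirtinger derivative `∂f/∂z`), which is holomorphic when `f` is harmonic. -/
noncomputable def complexGradient (f : ℂ → ℝ) (z : ℂ) : ℂ :=
  fderiv ℝ f z 1 - I * fderiv ℝ f z I

section ComplexGradient

variable {f g : ℂ → ℝ} {z : ℂ}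

lemma fderiv_apply_eq_re_complexGradient_mul (f : ℂ → ℝ) (z ζ : ℂ) :
    fderiv ℝ f z ζ = (complexGradient f z * ζ).re := by
  have hζ : ζ = ζ.re • (1 : ℂ) + ζ.im • I := by simp
  conv_lhs => rw [hζ, map_add, map_smul, map_smul]
  simp [complexGradient]
  ring

lemma complexGradient_eq_of_forall_fderiv_apply {a : ℂ}
    (h : ∀ ζ, fderiv ℝ f z ζ = (a * ζ).re) : complexGradient f z = a := by
  apply Complex.ext <;> simp [complexGradient, h]

lemma fderiv_eq_zero_of_complexGradient_eq_zero (h : complexGradient f z = 0) :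
    fderiv ℝ f z = 0 := by
  ext ζ
  simp [fderiv_apply_eq_re_complexGradient_mul, h]

lemma complexGradient_congr (h : f =ᶠ[𝓝 z] g) :
    complexGradient f z = complexGradient g z := by
  rw [complexGradient, complexGradient, h.fderiv_eq]

lemma complexGradient_sub (hf : DifferentiableAt ℝ f z) (hg : DifferentiableAt ℝ g z) :
    complexGradient (f - g) z = complexGradient f z - complexGradient g z := by
  simp only [complexGradient, fderiv_sub hf hg, _root_.sub_apply, ofReal_sub]
  ring

lemma complexGradient_comp {φ : ℂ → ℂ} (hf : DifferentiableAt ℝ f (φ z))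
    (hφ : DifferentiableAt ℂ φ z) :
    complexGradient (f ∘ φ) z = complexGradient f (φ z) * deriv φ z := by
  refine complexGradient_eq_of_forall_fderiv_apply fun ζ => ?_
  have hφ' := hφ.hasDerivAt.hasFDerivAt.restrictScalars ℝ
  rw [(hf.hasFDerivAt.comp z hφ').fderiv, ContinuousLinearMap.comp_apply,
    fderiv_apply_eq_re_complexGradient_mul]
  simp [mul_assoc, mul_comm ζ, -mul_re]

lemma complexGradient_re_comp {F : ℂ → ℂ} (hF : DifferentiableAt ℂ F z) :
    complexGradient (re ∘ F) z = deriv F z := by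
  have hre : complexGradient re (F z) = 1 :=
    complexGradient_eq_of_forall_fderiv_apply fun ζ => by
      rw [one_mul]; exact DFunLike.congr_fun reCLM.hasFDerivAt.fderiv ζ
  have hred : DifferentiableAt ℝ re (F z) := reCLM.differentiableAt
  rw [complexGradient_comp hred hF, hre, one_mul]

end ComplexGradient

section Harmonic

variable {f : ℂ → ℝ} {c : ℂ} {R : ℝ}

lemma harmonicAt_comp_of_analyticAt {φ : ℂ → ℂ} {z : ℂ} (hf : HarmonicAt f (φ z))
    (hφ : AnalyticAt ℂ φ z) : HarmonicAt (f ∘ φ) z := by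
  obtain ⟨R, hR, hball⟩ := Metric.mem_nhds_iff.1 hf.eventually
  obtain ⟨F, hF, hFf⟩ := HarmonicOnNhd.exists_analyticOnNhd_ball_re_eq fun _ hw => hball hw
  have hre : HarmonicAt (fun w => (F (φ w)).re) z :=
    ((hF _ (mem_ball_self hR)).comp hφ).harmonicAt_re
  refine (harmonicAt_congr_nhds ?_).1 hre
  filter_upwards [hφ.continuousAt (ball_mem_nhds _ hR)] with w hw using hFf hw

-- The real part controls a holomorphic function by Borel–Carathéodory, and the function controls
-- its derivative by the Cauchy estimates.
lemma norm_complexGradient_le_of_abs_le {B : ℝ} (hR : 0 < R) (hB : 0 < B)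
    (hf : HarmonicOnNhd f (ball c R)) (hfB : ∀ w ∈ ball c R, |f w| ≤ B) :
    ‖complexGradient f c‖ ≤ 8 * B / R := by
  obtain ⟨F, hF, hFf⟩ := hf.exists_analyticOnNhd_ball_re_eq
  have hc : c ∈ ball c R := mem_ball_self hR
  have hadd : ∀ w ∈ ball (0 : ℂ) R, c + w ∈ ball c R := fun w hw => by simpa using hw
  set G : ℂ → ℂ := fun w => F (c + w) - F c
  have hG : DifferentiableOn ℂ G (ball 0 R) :=
    (hF.differentiableOn.comp (by fun_prop) hadd).sub_const _
  have hGre : MapsTo G (ball 0 R) {w | w.re ≤ 2 * B} := fun w hw => by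
    have hw' : (F (c + w)).re = f (c + w) := hFf (hadd w hw)
    have hc' : (F c).re = f c := hFf hc
    simp only [mem_ofPred_eq, G, sub_re, hw', hc']
    linarith [le_of_abs_le (hfB _ (hadd w hw)), neg_le_of_abs_le (hfB c hc)]
  have hGnorm : ∀ w ∈ sphere (0 : ℂ) (R / 2), ‖G w‖ ≤ 4 * B := fun w hw => by
    have hw' : ‖w‖ = R / 2 := by simpa using hw
    have hwR : w ∈ ball (0 : ℂ) R := by simp [hw', hR]
    refine (borelCaratheodory_zero (by positivity) hG hGre hR hwR (by simp [G])).trans_eq ?_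
    rw [hw']
    field_simp
    ring
  have hcauchy : ‖deriv G 0‖ ≤ 4 * B / (R / 2) :=
    norm_deriv_le_of_forall_mem_sphere_norm_le (by positivity)
      (hG.diffContOnCl_ball (closedBall_subset_ball (by linarith))) hGnorm
  have hgrad : complexGradient f c = deriv G 0 := by
    have hEq : f =ᶠ[𝓝 c] re ∘ F := eventually_of_mem (ball_mem_nhds c hR) hFf.symm
    rw [complexGradient_congr hEq, complexGradient_re_comp (hF c hc).differentiableAt]
    simp [G, deriv_comp_const_add]
  rw [hgrad]
  exact hcauchy.trans_eq (by field_simp; norm_num)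

lemma isLittleO_complexGradient_nhdsNE (hf : ∀ᶠ z in 𝓝[≠] c, HarmonicAt f z)
    (ho : f =o[𝓝[≠] c] fun z => (z - c)⁻¹) :
    complexGradient f =o[𝓝[≠] c] fun z => (z - c)⁻¹ ^ 2 := by
  refine isLittleO_iff.2 fun ε hε => ?_
  obtain ⟨δ, hδ, hball⟩ := Metric.mem_nhdsWithin_iff.1
    (hf.and (isLittleO_iff.1 ho (show 0 < ε / 32 by positivity)))
  filter_upwards [self_mem_nhdsWithin, mem_nhdsWithin_of_mem_nhds (ball_mem_nhds c (half_pos hδ))]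
    with z hzc hzδ
  have hr : 0 < ‖z - c‖ / 2 := half_pos (norm_pos_iff.2 (sub_ne_zero.2 hzc))
  rw [mem_ball_iff_norm] at hzδ
  have hnear : ∀ w ∈ ball z (‖z - c‖ / 2), ‖z - c‖ / 2 < ‖w - c‖ ∧ ‖w - c‖ < δ := fun w hw => by
    rw [mem_ball_iff_norm] at hw
    have hle := norm_sub_le_norm_sub_add_norm_sub w z c
    have hge := norm_sub_le_norm_sub_add_norm_sub z w c
    rw [norm_sub_rev z w] at hge
    constructor <;> linarith
  have hmem : ∀ w ∈ ball z (‖z - c‖ / 2), w ∈ ball c δ ∩ {c}ᶜ := fun w hw =>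
    ⟨mem_ball_iff_norm.2 (hnear w hw).2,
      sub_ne_zero.1 (norm_pos_iff.1 (hr.trans (hnear w hw).1))⟩
  have hbound : ∀ w ∈ ball z (‖z - c‖ / 2), |f w| ≤ ε / 32 * (‖z - c‖ / 2)⁻¹ := fun w hw => by
    refine (hball (hmem w hw)).2.trans ?_
    rw [norm_inv]
    gcongr
    exact (hnear w hw).1.le
  refine (norm_complexGradient_le_of_abs_le hr (by positivity)
    (fun w hw => (hball (hmem w hw)).1) hbound).trans_eq ?_
  rw [norm_pow, norm_inv]
  field_simp
  norm_num

lemma exists_differentiableOn_eq_sub_mul_complexGradient (hR : 0 < R)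
    (hf : HarmonicOnNhd f (ball c R \ {c})) (ho : f =o[𝓝[≠] c] fun z => (z - c)⁻¹) :
    ∃ h : ℂ → ℂ, DifferentiableOn ℂ h (ball c R) ∧
      ∀ z ∈ ball c R \ {c}, h z = (z - c) * complexGradient f z := by
  have hball : ball c R ∈ 𝓝 c := ball_mem_nhds c hR
  have hd : DifferentiableOn ℂ (fun z => (z - c) * complexGradient f z) (ball c R \ {c}) :=
    fun z hz => (by fun_prop : DifferentiableAt ℂ (fun z => z - c) z).mul
      (HarmonicAt.differentiableAt_complex_partial (hf z hz)) |>.differentiableWithinAt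
  have hgrad : (fun z => (z - c) * complexGradient f z - (c - c) * complexGradient f c)
      =o[𝓝[≠] c] fun z => (z - c)⁻¹ := by
    have hgrad' := isLittleO_complexGradient_nhdsNE
      (eventually_of_mem (sdiff_mem_nhdsWithin_compl hball {c}) hf) ho
    refine ((isBigO_refl (fun z => z - c) _).mul_isLittleO hgrad').congr' (by simp) ?_
    filter_upwards [self_mem_nhdsWithin] with z hz
    have hz' : z - c ≠ 0 := sub_ne_zero.2 hz
    field_simp
  exact ⟨_, differentiableOn_update_limUnder_of_isLittleO hball hd hgrad,
    fun z hz => Function.update_of_ne hz.2 _ _⟩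

-- In the logarithmic coordinate `z = c + exp s` the gradient becomes constant.
lemma exists_comp_add_exp_eq_of_complexGradient_eq_div {a : ℂ} (hR : 0 < R)
    (hf : ∀ z ∈ ball c R \ {c}, DifferentiableAt ℝ f z)
    (hgrad : ∀ z ∈ ball c R \ {c}, complexGradient f z = a / (z - c)) :
    ∃ k : ℝ, ∀ s : ℂ, s.re < Real.log R → f (c + cexp s) = (a * s).re + k := by
  set S : Set ℂ := {s | s.re < Real.log R}
  have hSo : IsOpen S := isOpen_lt continuous_re continuous_const
  have hSc : Convex ℝ S := convex_halfSpace_re_lt _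
  set φ : ℂ → ℂ := fun s => c + cexp s
  have hφ : ∀ s ∈ S, φ s ∈ ball c R \ {c} := fun s hs => by
    simpa [φ, norm_exp] using (Real.lt_log_iff_exp_lt hR).1 hs
  have hφd : ∀ s, HasDerivAt φ (cexp s) s := fun s => (Complex.hasDerivAt_exp s).const_add c
  have hfφ : ∀ s ∈ S, DifferentiableAt ℝ (f ∘ φ) s := fun s hs =>
    (hf _ (hφ s hs)).comp s ((hφd s).differentiableAt.restrictScalars ℝ)
  have hlin : ∀ s, HasDerivAt (a * ·) a s := fun s => hasDerivAt_const_mul a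
  have hre : ∀ s, DifferentiableAt ℝ (re ∘ (a * ·)) s := fun s =>
    reCLM.differentiableAt.comp s ((hlin s).differentiableAt.restrictScalars ℝ)
  have hzero : ∀ s ∈ S, complexGradient (f ∘ φ - re ∘ (a * ·)) s = 0 := fun s hs => by
    rw [complexGradient_sub (hfφ s hs) (hre s),
      complexGradient_comp (hf _ (hφ s hs)) (hφd s).differentiableAt,
      complexGradient_re_comp (hlin s).differentiableAt, hgrad _ (hφ s hs), (hφd s).deriv,
      (hlin s).deriv, add_sub_cancel_left, div_mul_cancel₀ _ (Complex.exp_ne_zero s), sub_self]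
  obtain ⟨k, hk⟩ := hSo.exists_is_const_of_fderiv_eq_zero (𝕜 := ℝ) hSc.isPreconnected
    (fun s hs => ((hfφ s hs).sub (hre s)).differentiableWithinAt)
    fun s hs => fderiv_eq_zero_of_complexGradient_eq_zero (hzero s hs)
  exact ⟨k, fun s hs => sub_eq_iff_eq_add'.1 (hk s hs)⟩

-- The `2πi`-periodicity of `exp` forces `a` to be real.
lemma exists_eq_log_norm_of_complexGradient_eq_div {a : ℂ} (hR : 0 < R)
    (hf : ∀ z ∈ ball c R \ {c}, DifferentiableAt ℝ f z)
    (hgrad : ∀ z ∈ ball c R \ {c}, complexGradient f z = a / (z - c)) :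
    ∃ k : ℝ, ∀ z ∈ ball c R \ {c}, f z = a.re * Real.log ‖z - c‖ + k := by
  obtain ⟨k, hk⟩ := exists_comp_add_exp_eq_of_complexGradient_eq_div hR hf hgrad
  have him : a.im = 0 := by
    set s : ℂ := ((Real.log R - 1 : ℝ) : ℂ) with hs
    have hk₀ := hk s (by simp [hs])
    have hk₁ := hk (s + 2 * π * I) (by simp [hs])
    rw [Complex.exp_periodic s, hk₀] at hk₁
    simpa [mul_add, Real.pi_ne_zero] using hk₁
  refine ⟨k, fun z hz => ?_⟩
  have hzc : z - c ≠ 0 := sub_ne_zero.2 hz.2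
  have hlog : (Complex.log (z - c)).re < Real.log R := by
    simpa [log_re] using Real.log_lt_log (norm_pos_iff.2 hzc) (mem_ball_iff_norm.1 hz.1)
  simpa [Complex.exp_log hzc, him, log_re] using hk _ hlog

-- The theorem of Bôcher, with a growth condition in place of positivity.
theorem exists_eq_log_norm_add_re_of_harmonicOnNhd (hR : 0 < R)
    (hf : HarmonicOnNhd f (ball c R \ {c})) (ho : f =o[𝓝[≠] c] fun z => (z - c)⁻¹) :
    ∃ (α : ℝ) (F : ℂ → ℂ), DifferentiableOn ℂ F (ball c R) ∧
      ∀ z ∈ ball c R \ {c}, f z = α * Real.log ‖z - c‖ + (F z).re := by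
  obtain ⟨h, hh, hgrad⟩ := exists_differentiableOn_eq_sub_mul_complexGradient hR hf ho
  obtain ⟨F, hF⟩ := ((differentiableOn_dslope (ball_mem_nhds c hR)).2 hh).isExactOn_ball
  have hfd : ∀ z ∈ ball c R \ {c}, DifferentiableAt ℝ f z := fun z hz =>
    (hf z hz).1.differentiableAt two_ne_zero
  have hFd : ∀ z ∈ ball c R \ {c}, DifferentiableAt ℝ (re ∘ F) z := fun z hz =>
    reCLM.differentiableAt.comp z ((hF z hz.1).differentiableAt.restrictScalars ℝ)
  have hpole : ∀ z ∈ ball c R \ {c}, complexGradient (f - re ∘ F) z = h c / (z - c) := by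
    intro z hz
    have hzc : z - c ≠ 0 := sub_ne_zero.2 hz.2
    rw [complexGradient_sub (hfd z hz) (hFd z hz),
      complexGradient_re_comp (hF z hz.1).differentiableAt, (hF z hz.1).deriv,
      dslope_of_ne _ hz.2, slope_def_field, hgrad z hz]
    field_simp
    ring
  obtain ⟨k, hk⟩ := exists_eq_log_norm_of_complexGradient_eq_div hR
    (fun z hz => (hfd z hz).sub (hFd z hz)) hpole
  refine ⟨(h c).re, fun z => F z + k,
    fun z hz => (hF z hz).differentiableAt.differentiableWithinAt.add_const _, fun z hz => ?_⟩
  have hz' := hk z hz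
  simp only [Pi.sub_apply, Function.comp_apply] at hz'
  rw [add_re, ofReal_re]
  linarith

lemma tendsto_log_norm_sub_nhdsNE (c : ℂ) :
    Tendsto (fun z => Real.log ‖z - c‖) (𝓝[≠] c) atBot :=
  Real.tendsto_log_nhdsGT_zero.comp (tendsto_norm_sub_self_nhdsNE c)

lemma isLittleO_log_norm_sub_inv_nhdsNE (c : ℂ) :
    (fun z => Real.log ‖z - c‖) =o[𝓝[≠] c] fun z => (z - c)⁻¹ := by
  have hlog := (isLittleO_log_rpow_nhdsGT_zero (show (-1 : ℝ) < 0 by norm_num)).comp_tendsto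
    (tendsto_norm_sub_self_nhdsNE c)
  refine isLittleO_norm_right.1 (hlog.congr_right fun z => ?_)
  simp [Real.rpow_neg_one]

theorem exists_eq_re_of_harmonicOnNhd_of_isLittleO_log (hR : 0 < R)
    (hf : HarmonicOnNhd f (ball c R \ {c}))
    (ho : f =o[𝓝[≠] c] fun z => Real.log ‖z - c‖) :
    ∃ F : ℂ → ℂ, DifferentiableOn ℂ F (ball c R) ∧ ∀ z ∈ ball c R \ {c}, f z = (F z).re := by
  obtain ⟨α, F, hF, hfF⟩ := exists_eq_log_norm_add_re_of_harmonicOnNhd hR hf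
    (ho.trans (isLittleO_log_norm_sub_inv_nhdsNE c))
  have hball : ball c R ∈ 𝓝 c := ball_mem_nhds c hR
  have hlog := tendsto_log_norm_sub_nhdsNE c
  have hFre : (fun z => (F z).re) =o[𝓝[≠] c] fun z => Real.log ‖z - c‖ := by
    have hcont : ContinuousAt (fun z => (F z).re) c :=
      continuous_re.continuousAt.comp (hF.differentiableAt hball).continuousAt
    exact ((hcont.tendsto.mono_left nhdsWithin_le_nhds).isBigO_one ℝ).trans_isLittleO
      (isLittleO_const_left.2 <| .inr <| tendsto_abs_atBot_atTop.comp hlog)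
  have hα : (fun z => α * Real.log ‖z - c‖) =o[𝓝[≠] c] fun z => Real.log ‖z - c‖ := by
    refine (ho.sub hFre).congr' ?_ .rfl
    filter_upwards [sdiff_mem_nhdsWithin_compl hball {c}] with z hz
    rw [hfF z hz, add_sub_cancel_right]
  have hα0 : α = 0 := by
    by_contra hne
    exact isLittleO_irrefl (hlog.eventually_ne_atBot 0).frequently
      ((isLittleO_const_mul_left_iff hne).1 hα)
  exact ⟨F, hF, fun z hz => by rw [hfF z hz, hα0, zero_mul, zero_add]⟩

end Harmonic

section Exterior

variable {ρ : ℝ}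

lemma lt_norm_inv_of_mem_ball (hρ : 0 < ρ) {w : ℂ} (hw : w ∈ ball (0 : ℂ) ρ⁻¹ \ {0}) :
    ρ < ‖w⁻¹‖ := by
  rw [norm_inv]
  exact (lt_inv_comm₀ hρ (norm_pos_iff.2 hw.2)).2 (mem_ball_zero_iff.1 hw.1)

lemma inv_mem_ball_of_lt_norm (hρ : 0 < ρ) {z : ℂ} (hz : ρ < ‖z‖) :
    z⁻¹ ∈ ball (0 : ℂ) ρ⁻¹ \ {0} := by
  refine ⟨?_, inv_ne_zero (norm_pos_iff.1 (hρ.trans hz))⟩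
  rw [mem_ball_zero_iff, norm_inv]
  exact inv_strictAnti₀ hρ hz

lemma exists_eq_re_comp_inv_of_isLittleO_log (hρ : 0 < ρ) {v : ℂ → ℝ}
    (hv : ∀ z, ρ < ‖z‖ → HarmonicAt v z) (ho : v =o[cobounded ℂ] fun z => Real.log ‖z‖) :
    ∃ F : ℂ → ℂ, DifferentiableOn ℂ F (ball 0 ρ⁻¹) ∧ ∀ z, ρ < ‖z‖ → v z = (F z⁻¹).re := by
  have hharm : HarmonicOnNhd (v ∘ Inv.inv) (ball 0 ρ⁻¹ \ {0}) := fun w hw =>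
    harmonicAt_comp_of_analyticAt (hv _ (lt_norm_inv_of_mem_ball hρ hw)) (analyticAt_inv hw.2)
  have ho' : (v ∘ Inv.inv) =o[𝓝[≠] 0] fun w => Real.log ‖w - 0‖ :=
    isLittleO_neg_right.1 <| (ho.comp_tendsto tendsto_inv₀_nhdsNE_zero).congr_right fun w => by
      rw [Function.comp_apply, norm_inv, Real.log_inv, sub_zero]
  obtain ⟨F, hF, hvF⟩ :=
    exists_eq_re_of_harmonicOnNhd_of_isLittleO_log (inv_pos.2 hρ) hharm ho'
  refine ⟨F, hF, fun z hz => ?_⟩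
  rw [← hvF _ (inv_mem_ball_of_lt_norm hρ hz), Function.comp_apply, inv_inv]

end Exterior

/-- `u` is, on `‖z‖ > ρ`, the sum of a Fourier series with decaying radial factors,
`u (r e^{iθ}) = c₀ + ∑ⱼ (cos (jθ) cⱼ + sin (jθ) sⱼ) / r^j` over `j ≥ 1`, which converges absolutely
and uniformly on each region `‖z‖ ≥ r > ρ`. The coefficients are indexed from `0`, so that `cc j`
and `cs j` belong to the frequency `j + 1`; the second clause dominates the terms at all radii
`≥ r`. -/
def HasExteriorExpansion {E : Type*} [NormedAddCommGroup E] [NormedSpace ℝ E] (ρ : ℝ)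
    (u : ℂ → E) : Prop :=
  ∃ (c₀ : E) (cc cs : ℕ → E),
    (∀ r θ : ℝ, ρ < r → HasSum
      (fun j : ℕ => r⁻¹ ^ (j + 1) •
        (Real.cos (((j : ℝ) + 1) * θ) • cc j + Real.sin (((j : ℝ) + 1) * θ) • cs j))
      (u (r * cexp (θ * I)) - c₀)) ∧
    ∀ r : ℝ, ρ < r → Summable fun j : ℕ => (‖cc j‖ + ‖cs j‖) * r⁻¹ ^ (j + 1)

namespace HasExteriorExpansion

variable {E F : Type*} [NormedAddCommGroup E] [NormedSpace ℝ E] [NormedAddCommGroup F]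
  [NormedSpace ℝ F] {ρ : ℝ} {u v : ℂ → E}

lemma zero : HasExteriorExpansion ρ (0 : ℂ → E) :=
  ⟨0, 0, 0, fun r θ _ => by simp, fun r _ => by simp⟩

lemma add (hρ : 0 ≤ ρ) (hu : HasExteriorExpansion ρ u) (hv : HasExteriorExpansion ρ v) :
    HasExteriorExpansion ρ (u + v) := by
  obtain ⟨c₀, cc, cs, hsum, hsummable⟩ := hu
  obtain ⟨d₀, dc, ds, hsum', hsummable'⟩ := hv
  refine ⟨c₀ + d₀, cc + dc, cs + ds, fun r θ hr => ?_, fun r hr => ?_⟩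
  · convert (hsum r θ hr).add (hsum' r θ hr) using 1
    · ext j
      simp only [Pi.add_apply]
      module
    · simp only [Pi.add_apply]
      abel
  · have hr₀ : 0 ≤ r := hρ.trans hr.le
    refine ((hsummable r hr).add (hsummable' r hr)).of_nonneg_of_le
      (fun j => by positivity) fun j => ?_
    rw [← add_mul, add_add_add_comm]
    gcongr <;> exact norm_add_le _ _

lemma clm_comp (hρ : 0 ≤ ρ) (L : E →L[ℝ] F) (hu : HasExteriorExpansion ρ u) :
    HasExteriorExpansion ρ (L ∘ u) := by
  obtain ⟨c₀, cc, cs, hsum, hsummable⟩ := hu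
  refine ⟨L c₀, L ∘ cc, L ∘ cs, fun r θ hr => ?_, fun r hr => ?_⟩
  · simpa [Function.comp_def] using (hsum r θ hr).mapL L
  · have hr₀ : 0 ≤ r := hρ.trans hr.le
    refine ((hsummable r hr).mul_left ‖L‖).of_nonneg_of_le (fun j => by positivity) fun j => ?_
    rw [← mul_assoc, mul_add]
    gcongr <;> exact L.le_opNorm _

end HasExteriorExpansion

section Expansion

variable {ρ : ℝ}

lemma re_mul_inv_pow_polar (b : ℂ) (r θ : ℝ) (n : ℕ) :
    (b * (r * cexp (θ * I))⁻¹ ^ n).re =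
      r⁻¹ ^ n * (Real.cos (n * θ) * b.re + Real.sin (n * θ) * b.im) := by
  have hpow : (r * cexp (θ * I))⁻¹ ^ n = ((r⁻¹ ^ n : ℝ) : ℂ) * cexp ((-(n * θ) : ℝ) * I) := by
    rw [mul_inv, mul_pow, ← Complex.exp_neg, ← Complex.exp_nat_mul]
    push_cast
    ring_nf
  rw [hpow, mul_left_comm, re_ofReal_mul, mul_re, exp_ofReal_mul_I_re, exp_ofReal_mul_I_im,
    Real.cos_neg, Real.sin_neg]
  ring

lemma hasExteriorExpansion_of_eq_re_comp_inv (hρ : 0 < ρ) {v : ℂ → ℝ} {F : ℂ → ℂ}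
    (hF : DifferentiableOn ℂ F (ball 0 ρ⁻¹)) (hv : ∀ z, ρ < ‖z‖ → v z = (F z⁻¹).re) :
    HasExteriorExpansion ρ v := by
  set b : ℕ → ℂ := fun n => (n.factorial : ℂ)⁻¹ * iteratedDeriv n F 0 with hb
  have htaylor : ∀ z : ℂ, ρ < ‖z‖ →
      HasSum (fun j => b (j + 1) * z⁻¹ ^ (j + 1)) (F z⁻¹ - b 0) := fun z hz => by
    have hsum : HasSum (fun n => b n * z⁻¹ ^ n) (F z⁻¹) := by
      refine (hasSum_taylorSeries_on_ball hF (inv_mem_ball_of_lt_norm hρ hz).1).congr_fun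
        fun n => ?_
      simp only [hb, smul_eq_mul, sub_zero]
      ring
    simpa using (hasSum_nat_add_iff' 1).2 hsum
  refine ⟨(b 0).re, fun j => (b (j + 1)).re, fun j => (b (j + 1)).im, fun r θ hr => ?_,
    fun r hr => ?_⟩
  · have hz : ρ < ‖r * cexp (θ * I)‖ := by
      simpa [norm_exp_ofReal_mul_I] using hr.trans_le (le_abs_self r)
    rw [hv _ hz, ← sub_re]
    refine (hasSum_re (htaylor _ hz)).congr_fun fun j => ?_
    rw [re_mul_inv_pow_polar]
    push_cast
    rfl
  · have hr₀ : 0 < r := hρ.trans hr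
    have hz : ρ < ‖(r : ℂ)‖ := by simpa using hr.trans_le (le_abs_self r)
    refine ((htaylor r hz).summable.norm.mul_left 2).of_nonneg_of_le (fun j => by positivity)
      fun j => ?_
    rw [norm_mul, norm_pow, norm_inv, norm_real, norm_of_nonneg hr₀.le, ← mul_assoc, two_mul]
    gcongr
    exacts [abs_re_le_norm _, abs_im_le_norm _]

theorem hasExteriorExpansion_of_isLittleO_log {E : Type*} [NormedAddCommGroup E] [NormedSpace ℝ E]
    [FiniteDimensional ℝ E] (hρ : 0 < ρ) {u : ℂ → E} (hu : ∀ z, ρ < ‖z‖ → HarmonicAt u z)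
    (ho : u =o[cobounded ℂ] fun z => Real.log ‖z‖) : HasExteriorExpansion ρ u := by
  let b := Module.finBasis ℝ E
  let coord i : E →L[ℝ] ℝ := (b.coord i).toContinuousLinearMap
  have hcoord : ∀ i, HasExteriorExpansion ρ (coord i ∘ u) := fun i => by
    obtain ⟨F, hF, huF⟩ := exists_eq_re_comp_inv_of_isLittleO_log hρ
      (fun z hz => (hu z hz).comp_CLM (coord i))
      (((coord i).isBigO_comp u _).trans_isLittleO ho)
    exact hasExteriorExpansion_of_eq_re_comp_inv hρ hF huF
  have hsum : u = ∑ i, ContinuousLinearMap.toSpanSingleton ℝ (b i) ∘ coord i ∘ u := by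
    ext z
    simp [coord, b.sum_repr]
  rw [hsum]
  exact Finset.sum_induction _ _ (fun _ _ => .add hρ.le) .zero
    fun i _ => (hcoord i).clm_comp hρ.le _

end Expansion

section RealPlane

lemma iteratedFDeriv_two_apply_self {E F : Type*} [NormedAddCommGroup E] [NormedSpace ℝ E]
    [NormedAddCommGroup F] [NormedSpace ℝ F] {f : E → F} {x : E} (hf : ContDiffAt ℝ 2 f x)
    (v : E) : iteratedFDeriv ℝ 2 f x ![v, v] = fderiv ℝ (fun y => fderiv ℝ f y v) x v := by
  have hdf : DifferentiableAt ℝ (fderiv ℝ f) x :=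
    (hf.fderiv_right (m := 1) (by norm_num)).differentiableAt one_ne_zero
  simp [iteratedFDeriv_two_apply, fderiv_clm_apply hdf (differentiableAt_const v)]

lemma IsHarmonicOn.harmonicAt {u : ℝ × ℝ → ℂ} {S : Set (ℝ × ℝ)} (hS : IsOpen S)
    (hu : IsHarmonicOn u S) {z : ℂ} (hz : equivRealProdCLM z ∈ S) :
    HarmonicAt (u ∘ equivRealProdCLM) z := by
  set e := equivRealProdCLM
  have hcd : ∀ w, e w ∈ S → ContDiffAt ℝ 2 (u ∘ e) w := fun w hw =>
    (hu.1.contDiffAt (hS.mem_nhds hw)).comp w e.contDiff.contDiffAt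
  have hfderiv : ∀ {f : ℝ × ℝ → ℂ} {w ζ : ℂ}, fderiv ℝ (f ∘ e) w ζ = fderiv ℝ f (e w) (e ζ) := by
    intro f w ζ
    rw [e.comp_right_fderiv]
    rfl
  have hsecond : ∀ w, e w ∈ S → ∀ ζ, iteratedFDeriv ℝ 2 (u ∘ e) w ![ζ, ζ] =
      fderiv ℝ (fun y => fderiv ℝ u y (e ζ)) (e w) (e ζ) := fun w hw ζ => by
    have hcomp : (fun y => fderiv ℝ (u ∘ e) y ζ) = (fun y => fderiv ℝ u y (e ζ)) ∘ e :=
      funext fun _ => hfderiv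
    rw [iteratedFDeriv_two_apply_self (hcd w hw), hcomp, hfderiv]
  refine ⟨hcd z hz, ?_⟩
  filter_upwards [(hS.preimage e.continuous).mem_nhds hz] with w hw
  rw [laplacian_eq_iteratedFDeriv_complexPlane]
  simpa [hsecond w hw, e, equivRealProdCLM_apply] using hu.2 _ hw

lemma sq_lt_sq_add_sq_mem_cobounded (ρ : ℝ) :
    {x : ℝ × ℝ | ρ ^ 2 < x.1 ^ 2 + x.2 ^ 2} ∈ cobounded (ℝ × ℝ) := by
  filter_upwards [tendsto_norm_cobounded_atTop.eventually_gt_atTop |ρ|] with x hx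
  rcases lt_max_iff.1 hx with h | h
  · exact (sq_lt_sq.2 h).trans_le (le_add_of_nonneg_right (sq_nonneg _))
  · exact (sq_lt_sq.2 h).trans_le (le_add_of_nonneg_left (sq_nonneg _))

lemma isLittleO_log_norm_of_norm_le {E F : Type*} [SeminormedAddCommGroup E]
    [SeminormedAddCommGroup F] {u : E → F} {S : Set E} {B : ℝ} (hS : S ∈ cobounded E)
    (hB : ∀ x ∈ S, ‖u x‖ ≤ B) : u =o[cobounded E] fun x => Real.log ‖x‖ := by
  have hone : u =O[cobounded E] fun _ => (1 : ℝ) :=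
    .of_bound B (eventually_of_mem hS fun x hx => by simpa using hB x hx)
  exact hone.trans_isLittleO
    (Real.isLittleO_const_log_atTop.comp_tendsto tendsto_norm_cobounded_atTop)

lemma isLittleO_log_norm_comp_equivRealProdCLM {F : Type*} [NormedAddCommGroup F]
    {u : ℝ × ℝ → F} (hu : u =o[cobounded (ℝ × ℝ)] fun x => Real.log ‖x‖) :
    (u ∘ equivRealProdCLM) =o[cobounded ℂ] fun z => Real.log ‖z‖ := by
  have htendsto : Tendsto equivRealProdCLM (cobounded ℂ) (cobounded (ℝ × ℝ)) :=
    equivRealProdCLM.antilipschitz.tendsto_cobounded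
  refine (hu.comp_tendsto htendsto).trans_isBigO (.of_norm_eventuallyLE ?_)
  filter_upwards [(tendsto_norm_cobounded_atTop.comp htendsto).eventually_ge_atTop 1] with z hz
  have hle : ‖equivRealProdCLM z‖ ≤ ‖z‖ := max_le (abs_re_le_norm z) (abs_im_le_norm z)
  simp only [Function.comp_apply] at hz ⊢
  rw [norm_of_nonneg (Real.log_nonneg hz)]
  exact Real.log_le_log (by positivity) hle

lemma IsHarmonicOn.hasExteriorExpansion {ρ : ℝ} (hρ : 0 < ρ) {u : ℝ × ℝ → ℂ}
    (hu : IsHarmonicOn u {x : ℝ × ℝ | ρ ^ 2 < x.1 ^ 2 + x.2 ^ 2})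
    (ho : u =o[cobounded (ℝ × ℝ)] fun x => Real.log ‖x‖) :
    HasExteriorExpansion ρ (u ∘ equivRealProdCLM) := by
  have hopen : IsOpen {x : ℝ × ℝ | ρ ^ 2 < x.1 ^ 2 + x.2 ^ 2} :=
    isOpen_lt (by fun_prop) (by fun_prop)
  have hmem : ∀ z : ℂ, ρ < ‖z‖ → ρ ^ 2 < z.re ^ 2 + z.im ^ 2 := fun z hz => by
    have hsq := pow_lt_pow_left₀ hz hρ.le two_ne_zero
    rwa [Complex.sq_norm, normSq_apply, ← sq, ← sq] at hsq
  exact hasExteriorExpansion_of_isLittleO_log hρ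
    (fun z hz => hu.harmonicAt hopen (hmem z hz)) (isLittleO_log_norm_comp_equivRealProdCLM ho)

end RealPlane

theorem bounded_harmonic_exterior_expansion_general (ρ : ℝ) (hρ : 0 < ρ) (u : ℝ × ℝ → ℂ)
    (hharm : IsHarmonicOn u {x : ℝ × ℝ | ρ ^ 2 < x.1 ^ 2 + x.2 ^ 2})
    (ho : u =o[cobounded (ℝ × ℝ)] fun x => Real.log ‖x‖) :
    ∃ (c0 : ℂ) (cc cs : ℕ → ℂ),
      (∀ r θ : ℝ, ρ < r →
        HasSum
          (fun j : ℕ =>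
            (cc j * (Real.cos (((j : ℝ) + 1) * θ) : ℂ)
              + cs j * (Real.sin (((j : ℝ) + 1) * θ) : ℂ)) * (r : ℂ) ^ (-((j : ℤ) + 1)))
          (u (r * Real.cos θ, r * Real.sin θ) - c0)) ∧
      (∀ r₁ : ℝ, ρ < r₁ →
        Summable fun j : ℕ => (‖cc j‖ + ‖cs j‖) * r₁ ^ (-((j : ℤ) + 1))) := by
  obtain ⟨c₀, cc, cs, hsum, hsummable⟩ := hharm.hasExteriorExpansion hρ ho
  have hpow : ∀ {K : Type} [DivisionRing K] (x : K) (j : ℕ),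
      x ^ (-((j : ℤ) + 1)) = x⁻¹ ^ (j + 1) := fun x j => by
    rw [← inv_zpow']
    norm_cast
  have hpolar : ∀ r θ : ℝ, equivRealProdCLM (r * cexp (θ * I)) = (r * Real.cos θ, r * Real.sin θ) :=
    fun r θ => by simp [equivRealProdCLM_apply, exp_ofReal_mul_I_re, exp_ofReal_mul_I_im]
  refine ⟨c₀, cc, cs, fun r θ hr => ?_, fun r hr => ?_⟩
  · rw [← hpolar]
    refine (hsum r θ hr).congr_fun fun j => ?_
    simp only [hpow, real_smul]
    push_cast
    ring
  · simpa only [hpow] using hsummable r hr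

theorem bounded_harmonic_exterior_expansion (ρ : ℝ) (hρ : 0 < ρ) (u : ℝ × ℝ → ℂ)
    (hharm : IsHarmonicOn u {x : ℝ × ℝ | ρ ^ 2 < x.1 ^ 2 + x.2 ^ 2})
    (hbdd : ∃ B, ∀ x : ℝ × ℝ, ρ ^ 2 < x.1 ^ 2 + x.2 ^ 2 → ‖u x‖ ≤ B) :
    ∃ (c0 : ℂ) (cc cs : ℕ → ℂ),
      (∀ r θ : ℝ, ρ < r →
        HasSum
          (fun j : ℕ =>
            (cc j * (Real.cos (((j : ℝ) + 1) * θ) : ℂ)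
              + cs j * (Real.sin (((j : ℝ) + 1) * θ) : ℂ)) * (r : ℂ) ^ (-((j : ℤ) + 1)))
          (u (r * Real.cos θ, r * Real.sin θ) - c0)) ∧
      -- absolute convergence, uniform on each region `r ≥ r₁ > ρ`
      (∀ r₁ : ℝ, ρ < r₁ →
        Summable fun j : ℕ => (‖cc j‖ + ‖cs j‖) * r₁ ^ (-((j : ℤ) + 1))) := by
  obtain ⟨B, hB⟩ := hbdd
  exact bounded_harmonic_exterior_expansion_general ρ hρ u hharm
    (isLittleO_log_norm_of_norm_le (sq_lt_sq_add_sq_mem_cobounded ρ) hB)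
end

section
/- Let Ω ⊂ ℝ² be the complement of finitely many closed segments Γ_2, …, Γ_n, each joining a fixed point s₁ to a point s_k. Suppose u is harmonic on Ω, bounded, lies locally in the Friedrichs domain (i.e., satisfies the matching conditions u₊ = e^{−2πi α̃} u₋ and ∂_ν u₊ = −e^{−2πi α̃} ∂_ν u₋ across each segment, and u → 0 at the endpoints s_k), and is bounded at infinity. Then u ≡ 0. -/
/-!
Along each normal the matching isometry preserves `‖u‖` and `⟪u, ∂u⟫`, so `W = ‖u‖²` extends across
the segments, and the extension is differentiable along the normals. Off the segments `W` is
subharmonic. Adding to `W` a small multiple of a convex function with a kink across each segment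
rules out a maximum on a segment, since an upward kink survives the addition of a function that is
differentiable along the normal. Logarithmic barriers at the endpoints of the segments and at
infinity then give `W ≤ ε`, as in Liouville's theorem, from the vanishing of `u` at one endpoint.

This maximum principle needs `W` to be upper semicontinuous, whereas the matching conditions only
hold along each normal separately, with no uniformity in its foot. Let `E` be the closure of the set
of points of a segment at which upper semicontinuity fails. If `E` were nonempty, Baire's theorem
would give a portion of `E` on which the difference quotients of `W` along the normals are uniformly
bounded. Comparing `W` with explicit harmonic majorants over the gaps of `E` then shows that `W` is
upper semicontinuous at the points of that portion, a contradiction.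
-/

open Complex Real Filter Topology Set

/-- rotation by 90 degrees, used to produce a normal vector to a segment -/
def rot90 (v : ℝ × ℝ) : ℝ × ℝ := (-v.2, v.1)

section SecondDifference

variable {V E : Type*} [AddCommGroup V] [AddCommGroup E] [Module ℝ E]

/-- The symmetric second difference of `f` at `z` with increment `w`. -/
def secondDiff (f : V → E) (z w : V) : E := f (z + w) + f (z - w) - (2 : ℝ) • f z

theorem secondDiff_nonneg_of_convexOn [Module ℝ V] {g : V → ℝ} (hg : ConvexOn ℝ univ g) (z w : V) :
    0 ≤ secondDiff g z w := by
  have hmid := hg.2 (mem_univ (z + w)) (mem_univ (z - w)) (by norm_num : (0 : ℝ) ≤ 1 / 2)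
    (by norm_num : (0 : ℝ) ≤ 1 / 2) (by norm_num)
  rw [show (1 / 2 : ℝ) • (z + w) + (1 / 2 : ℝ) • (z - w) = z by module] at hmid
  simp only [secondDiff, smul_eq_mul] at hmid ⊢
  linarith

end SecondDifference

section Taylor

variable {V E : Type*} [NormedAddCommGroup V] [NormedSpace ℝ V] [NormedAddCommGroup E]
  [NormedSpace ℝ E]

theorem hasFDerivAt_comp_const_sub {f : V → E} {f' : V →L[ℝ] E} {a x : V}
    (hf : HasFDerivAt f f' (a - x)) : HasFDerivAt (fun y => f (a - y)) (-f') x := by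
  convert! hf.comp x ((hasFDerivAt_id x).const_sub a) using 1
  ext y
  simp

theorem secondDiff_sub_hessian_isLittleO {f : V → E} {z : V} (hf : ContDiffAt ℝ 2 f z) :
    (fun w => secondDiff f z w - fderiv ℝ (fderiv ℝ f) z w w) =o[𝓝 0] fun w => ‖w‖ ^ 2 := by
  set B := fderiv ℝ (fderiv ℝ f) z
  have hsymm : IsSymmSndFDerivAt ℝ f z := hf.isSymmSndFDerivAt (by simp)
  have hB : HasFDerivAt (fderiv ℝ f) B z :=
    ((hf.fderiv_right (m := 1) (by norm_num)).differentiableAt (by norm_num)).hasFDerivAt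
  have hdiff : ∀ᶠ y in 𝓝 z, HasFDerivAt f (fderiv ℝ f y) y :=
    (hf.eventually (by simp)).mono fun y hy => (hy.differentiableAt (by norm_num)).hasFDerivAt
  obtain ⟨r, hr, hball⟩ := Metric.eventually_nhds_iff_ball.1 hdiff
  have hfirst : ∀ w ∈ Metric.ball (0 : V) r,
      HasFDerivWithinAt (fun w => secondDiff f z w - B w w)
        (fderiv ℝ f (z + w) - fderiv ℝ f (z - w) - (2 : ℝ) • B w) (Metric.ball 0 r) w := by
    intro w hw
    rw [mem_ball_zero_iff] at hw
    refine HasFDerivAt.hasFDerivWithinAt ?_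
    convert! ((((hasFDerivAt_comp_add_left z).2 (hball (z + w) (by simpa using hw))).add
      (hasFDerivAt_comp_const_sub (hball (z - w) (by simpa using hw)))).sub_const
        ((2 : ℝ) • f z)).sub (B.hasFDerivAt.clm_apply (hasFDerivAt_id w)) using 1
    ext y
    simp [two_smul, sub_eq_add_neg, hsymm y w, B]
  have hsecond : (fun w => fderiv ℝ f (z + w) - fderiv ℝ f (z - w) - (2 : ℝ) • B w)
      =o[𝓝 0] fun w => ‖w - 0‖ ^ 1 := by
    have := (((hasFDerivAt_comp_add_left z).2 (by simpa using hB)).sub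
      (hasFDerivAt_comp_const_sub (x := 0) (by simpa using hB))).isLittleO
    simpa [two_smul] using this.norm_right
  have hzero : secondDiff f z 0 - B 0 0 = 0 := by simp [secondDiff, two_smul]
  have hres := (convex_ball (0 : V) r).isLittleO_pow_succ (Metric.mem_ball_self hr) hfirst
    (hsecond.mono nhdsWithin_le_nhds)
  simpa only [hzero, sub_zero, Metric.isOpen_ball.nhdsWithin_eq (Metric.mem_ball_self hr)]
    using hres

theorem secondDiff_isLittleO_of_hasDerivAt {f : ℝ → E} {f' : E} {x : ℝ} (hf : HasDerivAt f f' x) :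
    (fun t => secondDiff f x t) =o[𝓝 0] fun t => t := by
  have hsum := ((hasFDerivAt_comp_add_left x).2
    (by simpa using hf.hasFDerivAt)).add (hasFDerivAt_comp_const_sub (x := 0)
      (by simpa using hf.hasFDerivAt))
  refine hsum.isLittleO.congr (fun t => ?_) fun t => sub_zero t
  simp [secondDiff]
  module

end Taylor

section AsymptoticSubharmonicity

open InnerProductSpace

variable {W : ℂ → ℝ} {z : ℂ}

/-- The second difference of `f` at `z` over the four points `z ± t v` and `z ± i t v`; for smooth
`f` it is `t² ‖v‖² Δ f z` up to an error `o(t²)`. -/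
noncomputable def fourPointDiff {E : Type*} [AddCommGroup E] [Module ℝ E] (f : ℂ → E) (v z : ℂ)
    (t : ℝ) : E :=
  secondDiff f z (t • v) + secondDiff f z (t • (I * v))

/-- `W` is asymptotically subharmonic at `z`: in every direction the four-point second differences
at `z` are at least `-o(t²)`. This is the pointwise form of `0 ≤ Δ W` that the maximum principle
needs; it asks for no differentiability. -/
def AsympSubharmonicAt (W : ℂ → ℝ) (z : ℂ) : Prop :=
  ∀ v : ℂ, ∀ c > 0, ∀ᶠ t : ℝ in 𝓝 0, -(c * t ^ 2) ≤ fourPointDiff W v z t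

theorem fourPointDiff_isLittleO_of_harmonicAt {E : Type*} [NormedAddCommGroup E]
    [NormedSpace ℝ E] {f : ℂ → E} (hf : HarmonicAt f z) (v : ℂ) :
    fourPointDiff f v z =o[𝓝 0] fun t : ℝ => t ^ 2 := by
  set B := fderiv ℝ (fderiv ℝ f) z
  have hlaplacian : B 1 1 + B I I = 0 := by
    simpa [laplacian_eq_iteratedFDeriv_complexPlane, iteratedFDeriv_two_apply]
      using hf.2.self_of_nhds
  have hline (v : ℂ) : (fun t : ℝ => secondDiff f z (t • v) - t ^ 2 • B v v)
      =o[𝓝 0] fun t : ℝ => t ^ 2 := by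
    have hsmul : Tendsto (fun t : ℝ => t • v) (𝓝 0) (𝓝 0) :=
      Continuous.tendsto' (by fun_prop) 0 0 (zero_smul ℝ v)
    refine (((secondDiff_sub_hessian_isLittleO hf.1).comp_tendsto hsmul).congr_left
      fun t => ?_).trans_isBigO (.of_bound (‖v‖ ^ 2) (.of_forall fun t => ?_))
    · simp only [Function.comp_apply, map_smul, smul_apply, smul_smul, sq, B]
    · simp [mul_pow, mul_comm]
  have htrace : B v v + B (I * v) (I * v) = 0 := by
    obtain ⟨a, b, rfl⟩ : ∃ a b : ℝ, v = a • 1 + b • I := ⟨v.re, v.im, by simp [re_add_im]⟩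
    have hrot : I * (a • 1 + b • I) = a • I - b • 1 := by
      simp only [real_smul]
      linear_combination b * I_mul_I
    rw [hrot]
    simp only [map_add, map_sub, map_smul, add_apply, sub_apply, smul_apply]
    rw [eq_neg_of_add_eq_zero_left hlaplacian]
    module
  refine ((hline v).add (hline (I * v))).congr_left fun t => ?_
  rw [eq_neg_of_add_eq_zero_left htrace, fourPointDiff]
  module

section InnerProduct

variable {E : Type*} [NormedAddCommGroup E] [InnerProductSpace ℝ E]

theorem secondDiff_norm_sq (a b : E) : secondDiff (fun y => ‖y‖ ^ 2) a b = 2 * ‖b‖ ^ 2 := by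
  have := parallelogram_law_with_norm ℝ a b
  simp only [secondDiff, smul_eq_mul]
  linarith

theorem two_mul_inner_secondDiff_le (f : ℂ → E) (z w : ℂ) :
    2 * inner ℝ (f z) (secondDiff f z w) ≤ secondDiff (fun y => ‖f y‖ ^ 2) z w := by
  have htangent (a b : E) : ‖b‖ ^ 2 + 2 * inner ℝ b (a - b) ≤ ‖a‖ ^ 2 := by
    have := norm_add_sq_real b (a - b)
    rw [add_sub_cancel] at this
    nlinarith [sq_nonneg ‖a - b‖]
  have hsplit : secondDiff f z w = (f (z + w) - f z) + (f (z - w) - f z) := by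
    rw [secondDiff]
    module
  have hplus := htangent (f (z + w)) (f z)
  have hminus := htangent (f (z - w)) (f z)
  rw [hsplit, inner_add_right]
  simp only [secondDiff, smul_eq_mul]
  linarith

theorem asympSubharmonicAt_norm_sq {f : ℂ → E} (hf : HarmonicAt f z) :
    AsympSubharmonicAt (fun y => ‖f y‖ ^ 2) z := by
  intro v c hc
  have hinner : (fun t : ℝ => inner ℝ (f z) (fourPointDiff f v z t)) =o[𝓝 0] fun t : ℝ => t ^ 2 :=
    ((innerSL ℝ (f z)).isBigO_comp _ _).trans_isLittleO (fourPointDiff_isLittleO_of_harmonicAt hf v)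
  filter_upwards [hinner.bound (half_pos hc)] with t ht
  rw [Real.norm_of_nonneg (sq_nonneg t)] at ht
  have hlow := (abs_le.1 ht).1
  have hv := two_mul_inner_secondDiff_le f z (t • v)
  have hIv := two_mul_inner_secondDiff_le f z (t • (I * v))
  rw [fourPointDiff, inner_add_right] at hlow
  rw [fourPointDiff]
  linarith

end InnerProduct

theorem eventually_add_sub_smul {p : ℂ → Prop} (h : ∀ᶠ y in 𝓝 z, p y) (v : ℂ) :
    ∀ᶠ t : ℝ in 𝓝 0, p (z + t • v) ∧ p (z - t • v) := by
  have hplus : Tendsto (fun t : ℝ => z + t • v) (𝓝 0) (𝓝 z) :=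
    Continuous.tendsto' (by fun_prop) 0 z (by simp)
  have hminus : Tendsto (fun t : ℝ => z - t • v) (𝓝 0) (𝓝 z) :=
    Continuous.tendsto' (by fun_prop) 0 z (by simp)
  exact (hplus.eventually h).and (hminus.eventually h)

theorem AsympSubharmonicAt.congr {W' : ℂ → ℝ} (hW : AsympSubharmonicAt W z) (h : W =ᶠ[𝓝 z] W') :
    AsympSubharmonicAt W' z := by
  have hnear (v : ℂ) : ∀ᶠ t : ℝ in 𝓝 0, secondDiff W z (t • v) = secondDiff W' z (t • v) := by
    filter_upwards [eventually_add_sub_smul h v] with t ⟨h₁, h₂⟩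
    simp only [secondDiff, h₁, h₂, h.self_of_nhds]
  intro v c hc
  filter_upwards [hW v c hc, hnear v, hnear (I * v)] with t ht h₁ h₂
  rwa [fourPointDiff, ← h₁, ← h₂]

theorem AsympSubharmonicAt.comp_add_mul {a τ : ℂ} (hW : AsympSubharmonicAt W (a + z * τ)) :
    AsympSubharmonicAt (fun y => W (a + y * τ)) z := by
  have hpull (w : ℂ) : secondDiff (fun y => W (a + y * τ)) z w =
      secondDiff W (a + z * τ) (w * τ) := by
    simp only [secondDiff, add_mul, sub_mul, add_assoc, add_sub_assoc]
  intro v c hc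
  filter_upwards [hW (v * τ) c hc] with t ht
  simpa only [fourPointDiff, hpull, smul_mul_assoc, mul_assoc] using ht

end AsymptoticSubharmonicity

section LocalMaximum

open InnerProductSpace

variable {W h g : ℂ → ℝ} {z : ℂ}

/-- `g` has a convex kink at `z` in the direction `v`: its second differences along `v` grow at
least linearly. -/
def HasKinkAt (g : ℂ → ℝ) (v z : ℂ) : Prop :=
  ∃ c > 0, ∀ t > 0, c * t ≤ secondDiff g z (t • v)

/-- `W` is subharmonic at `z`, or differentiable at `z` along a direction in which `g` has a kink.
In the second case `W + ε g` has a kink as well, hence no local maximum at `z`; this is how the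
maximum principle passes through the points of a segment. -/
def SubharmonicAcrossAt (W g : ℂ → ℝ) (z : ℂ) : Prop :=
  AsympSubharmonicAt W z ∨
    ∃ v : ℂ, HasKinkAt g v z ∧ DifferentiableAt ℝ (fun t : ℝ => W (z + t • v)) 0

theorem eventually_secondDiff_nonpos_of_isLocalMax (h : IsLocalMax W z) (v : ℂ) :
    ∀ᶠ t : ℝ in 𝓝 0, secondDiff W z (t • v) ≤ 0 := by
  filter_upwards [eventually_add_sub_smul h v] with t ⟨h₁, h₂⟩
  simp only [secondDiff, smul_eq_mul]
  linarith

theorem secondDiff_sub_add_mul (W h g : ℂ → ℝ) (ε : ℝ) (z w : ℂ) :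
    secondDiff (fun y => W y - h y + ε * (‖y‖ ^ 2 + g y)) z w =
      secondDiff W z w - secondDiff h z w + ε * (2 * ‖w‖ ^ 2 + secondDiff g z w) := by
  rw [← secondDiff_norm_sq z w]
  simp only [secondDiff, smul_eq_mul]
  ring

theorem not_isLocalMax_of_asympSubharmonicAt (hg : ConvexOn ℝ univ g) (hh : HarmonicAt h z)
    (hW : AsympSubharmonicAt W z) {ε : ℝ} (hε : 0 < ε) :
    ¬ IsLocalMax (fun y => W y - h y + ε * (‖y‖ ^ 2 + g y)) z := by
  intro hmax
  have hfour := (fourPointDiff_isLittleO_of_harmonicAt hh 1).bound hε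
  obtain ⟨t, ⟨⟨⟨hre, him⟩, hWt⟩, hht⟩, ht⟩ :=
    ((((eventually_secondDiff_nonpos_of_isLocalMax hmax 1).and
      (eventually_secondDiff_nonpos_of_isLocalMax hmax (I * 1))).and (hW 1 ε hε)).and
        hfour).filter_mono (nhdsWithin_le_nhds (s := Ioi 0)) |>.and self_mem_nhdsWithin |>.exists
  rw [Real.norm_of_nonneg (sq_nonneg t)] at hht
  have hhigh := (abs_le.1 hht).2
  rw [secondDiff_sub_add_mul] at hre him
  have hgre := mul_nonneg hε.le (secondDiff_nonneg_of_convexOn hg z (t • 1))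
  have hgim := mul_nonneg hε.le (secondDiff_nonneg_of_convexOn hg z (t • (I * 1)))
  have hpos : 0 < ε * t ^ 2 := mul_pos hε (pow_pos ht 2)
  simp only [fourPointDiff, norm_smul, norm_I, norm_one, mul_one, Real.norm_eq_abs,
    sq_abs] at hre him hWt hhigh hgre hgim
  linarith

theorem not_isLocalMax_of_hasKinkAt {v : ℂ} (hg : HasKinkAt g v z) (hh : HarmonicAt h z)
    (hW : DifferentiableAt ℝ (fun t : ℝ => W (z + t • v)) 0) {ε : ℝ} (hε : 0 < ε) :
    ¬ IsLocalMax (fun y => W y - h y + ε * (‖y‖ ^ 2 + g y)) z := by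
  intro hmax
  obtain ⟨c, hc, hkink⟩ := hg
  have hline : DifferentiableAt ℝ (fun t : ℝ => W (z + t • v) - h (z + t • v)) 0 := by
    refine hW.sub (DifferentiableAt.comp (g := h) (0 : ℝ) ?_ (by fun_prop))
    simpa using hh.1.differentiableAt (by norm_num)
  have hsmall := (secondDiff_isLittleO_of_hasDerivAt hline.hasDerivAt).bound
    (half_pos (mul_pos hε hc))
  obtain ⟨t, ⟨hle, hdiff⟩, ht⟩ := ((eventually_secondDiff_nonpos_of_isLocalMax hmax v).and
    hsmall).filter_mono (nhdsWithin_le_nhds (s := Ioi 0)) |>.and self_mem_nhdsWithin |>.exists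
  rw [Real.norm_of_nonneg (le_of_lt ht)] at hdiff
  have hlow := (abs_le.1 hdiff).1
  have hrestrict : secondDiff (fun t : ℝ => W (z + t • v) - h (z + t • v)) 0 t =
      secondDiff W z (t • v) - secondDiff h z (t • v) := by
    simp only [secondDiff, zero_add, zero_sub, zero_smul, add_zero, neg_smul, ← sub_eq_add_neg,
      smul_eq_mul]
    ring
  rw [secondDiff_sub_add_mul] at hle
  rw [hrestrict] at hlow
  have hkinkt := mul_le_mul_of_nonneg_left (hkink t ht) hε.le
  have hpos : 0 < ε * c * t := mul_pos (mul_pos hε hc) ht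
  have hsq : 0 ≤ ε * (2 * ‖t • v‖ ^ 2) := by positivity
  linarith

theorem SubharmonicAcrossAt.not_isLocalMax (hW : SubharmonicAcrossAt W g z)
    (hg : ConvexOn ℝ univ g) (hh : HarmonicAt h z) {ε : ℝ} (hε : 0 < ε) :
    ¬ IsLocalMax (fun y => W y - h y + ε * (‖y‖ ^ 2 + g y)) z := by
  rcases hW with hW | ⟨v, hkink, hdiff⟩
  · exact not_isLocalMax_of_asympSubharmonicAt hg hh hW hε
  · exact not_isLocalMax_of_hasKinkAt hkink hh hdiff hε

end LocalMaximum

section MaximumPrinciple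

open InnerProductSpace

variable {W h g : ℂ → ℝ}

theorem le_of_forall_pos_le_add_mul {x y l : ℝ} (h : ∀ η > 0, x ≤ y + η * l) : x ≤ y := by
  have hlim : Tendsto (fun η : ℝ => y + η * l) (𝓝[>] 0) (𝓝 y) :=
    (Continuous.tendsto' (by fun_prop) 0 y (by simp)).mono_left nhdsWithin_le_nhds
  exact ge_of_tendsto hlim (eventually_nhdsWithin_of_forall h)

theorem le_of_subharmonicAcross {K U : Set ℂ} (hK : IsCompact K) (hU : IsOpen U) (hUK : U ⊆ K)
    (hg : ConvexOn ℝ univ g) (husc : UpperSemicontinuousOn (fun z => W z - h z) K)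
    (hbdry : ∀ z ∈ K \ U, W z ≤ h z) (hharm : HarmonicOnNhd h U)
    (hW : ∀ z ∈ U, SubharmonicAcrossAt W g z) {z : ℂ} (hz : z ∈ K) : W z ≤ h z := by
  have hgc : Continuous g := continuousOn_univ.1 (hg.continuousOn isOpen_univ)
  obtain ⟨C, hC⟩ := hK.exists_bound_of_continuousOn (f := fun z => ‖z‖ ^ 2 + g z) (by fun_prop)
  have hC' (y : ℂ) (hy : y ∈ K) := abs_le.1 (hC y hy)
  refine le_of_forall_pos_le_add_mul (l := 2 * C) fun ε hε => ?_
  obtain ⟨y, hy, hmax⟩ := (husc.add (g := fun z => ε * (‖z‖ ^ 2 + g z))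
    (Continuous.continuousOn (by fun_prop)).upperSemicontinuousOn).exists_isMaxOn ⟨z, hz⟩ hK
  have hyU : y ∉ U := fun hyU =>
    (hW y hyU).not_isLocalMax hg (hharm y hyU) hε (hmax.isLocalMax
      (mem_of_superset (hU.mem_nhds hyU) hUK))
  have hle : W z - h z + ε * (‖z‖ ^ 2 + g z) ≤ W y - h y + ε * (‖y‖ ^ 2 + g y) := hmax hz
  have hyh := hbdry y ⟨hy, hyU⟩
  have hlow := mul_le_mul_of_nonneg_left (hC' z hz).1 hε.le
  have hhigh := mul_le_mul_of_nonneg_left (hC' y hy).2 hε.le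
  linarith

theorem exists_logBarrier {P K : Set ℂ} (hP : P.Finite) (hK : IsCompact K) :
    ∃ β : ℂ → ℝ, (∀ z ∈ K, 0 ≤ β z) ∧ HarmonicOnNhd β Pᶜ ∧
      ∀ a ∈ P, Tendsto β (𝓝[≠] a) atTop := by
  set p : ℂ → ℂ := fun z => ∏ a ∈ hP.toFinset, (z - a)
  have hpne {z : ℂ} (hz : z ∉ P) : p z ≠ 0 :=
    Finset.prod_ne_zero_iff.2 fun a ha => sub_ne_zero.2 fun h => hz (h ▸ hP.mem_toFinset.1 ha)
  obtain ⟨D, hD⟩ := hK.exists_bound_of_continuousOn (f := p) (by fun_prop)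
  refine ⟨fun z => Real.log (max D 1) - Real.log ‖p z‖, fun z hz => sub_nonneg.2 ?_, fun z hz => ?_,
    fun a ha => ?_⟩
  · rcases (norm_nonneg (p z)).eq_or_lt with h0 | hpos
    · simpa [← h0] using Real.log_nonneg (le_max_right D 1)
    · exact Real.log_le_log hpos ((hD z hz).trans (le_max_left D 1))
  · exact (harmonicAt_const _).sub (AnalyticAt.harmonicAt_log_norm (by fun_prop) (hpne hz))
  · have hzero : Tendsto (fun z => ‖p z‖) (𝓝[≠] a) (𝓝[≠] 0) := by
      refine tendsto_nhdsWithin_iff.2 ⟨?_, ?_⟩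
      · have hpa : p a = 0 := Finset.prod_eq_zero (hP.mem_toFinset.2 ha) (sub_self a)
        exact (Continuous.tendsto' (by fun_prop) a 0 (by simp [hpa])).mono_left nhdsWithin_le_nhds
      · filter_upwards [nhdsNE_le_cofinite a hP.compl_mem_cofinite] with z hz
        exact norm_ne_zero_iff.2 (hpne hz)
    exact tendsto_atTop_add_const_left _ _
      (tendsto_neg_atBot_atTop.comp (Real.tendsto_log_nhdsNE_zero.comp hzero))

theorem SubharmonicAcrossAt.congr {W' : ℂ → ℝ} {z : ℂ} (hW : SubharmonicAcrossAt W g z)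
    (h : W =ᶠ[𝓝 z] W') : SubharmonicAcrossAt W' g z := by
  rcases hW with hW | ⟨v, hkink, hdiff⟩
  · exact .inl (hW.congr h)
  · refine .inr ⟨v, hkink, hdiff.congr_of_eventuallyEq ?_⟩
    filter_upwards [eventually_add_sub_smul h v] with t ht using ht.1.symm

theorem upperSemicontinuousOn_piecewise_zero {X : Type*} [TopologicalSpace X] {F : X → ℝ}
    {K P : Set X} [∀ x, Decidable (x ∈ P)] (hP : IsClosed P)
    (husc : UpperSemicontinuousOn F (K \ P)) (hbot : ∀ a ∈ P, Tendsto F (𝓝[K \ P] a) atBot) :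
    UpperSemicontinuousOn (P.piecewise 0 F) K := by
  intro y hy r hr
  have hnear : ∀ᶠ x in 𝓝[K \ P] y, F x < r := by
    by_cases hyP : y ∈ P
    · exact (hbot y hyP).eventually_lt_atBot r
    · exact husc y ⟨hy, hyP⟩ r (by rwa [piecewise_eq_of_notMem _ _ _ hyP] at hr)
  by_cases hyP : y ∈ P
  · rw [piecewise_eq_of_mem _ _ _ hyP] at hr
    rw [eventually_nhdsWithin_iff] at hnear ⊢
    filter_upwards [hnear] with x hx hxK
    by_cases hxP : x ∈ P
    · rwa [piecewise_eq_of_mem _ _ _ hxP]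
    · simpa only [piecewise_eq_of_notMem _ _ _ hxP] using hx ⟨hxK, hxP⟩
  · have hPy : Pᶜ ∈ 𝓝[K] y := mem_nhdsWithin_of_mem_nhds (hP.isOpen_compl.mem_nhds hyP)
    rw [sdiff_eq, nhdsWithin_inter_of_mem' hPy] at hnear
    filter_upwards [hnear, hPy] with x hx hxP
    rwa [piecewise_eq_of_notMem _ _ _ hxP]

theorem upperSemicontinuousOn_piecewise_sub_add {K P : Set ℂ} [∀ z, Decidable (z ∈ P)]
    {β : ℂ → ℝ} (hK : IsCompact K) (hP : IsClosed P) (husc : UpperSemicontinuousOn W (K \ P))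
    (hbdd : BddAbove (W '' (K \ P))) (hh : ContinuousOn h K) (hβ : ContinuousOn β (K \ P))
    (hβtop : ∀ a ∈ P, Tendsto β (𝓝[K \ P] a) atTop) :
    UpperSemicontinuousOn (fun z => P.piecewise (h + β) W z - (h + β) z) K := by
  obtain ⟨M, hM⟩ := hbdd
  obtain ⟨m, hm⟩ := hK.exists_bound_of_continuousOn hh
  have hzero : (fun z => P.piecewise (h + β) W z - (h + β) z) =
      P.piecewise 0 (fun z => W z - (h + β) z) := by
    ext z
    by_cases hz : z ∈ P <;> simp [hz]
  rw [hzero]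
  refine upperSemicontinuousOn_piecewise_zero hP ?_ fun a ha => ?_
  · simpa only [sub_eq_add_neg, Pi.neg_apply] using
      husc.add ((hh.mono sdiff_subset).add hβ).neg.upperSemicontinuousOn
  · have hsplit (z : ℂ) : W z - (h + β) z = (W z - h z) + -β z := by
      simp only [Pi.add_apply]
      ring
    simp only [hsplit]
    refine tendsto_atBot_add_left_of_ge' _ (M + m) ?_ (tendsto_neg_atTop_atBot.comp (hβtop a ha))
    filter_upwards [self_mem_nhdsWithin] with z hz
    linarith [hM (mem_image_of_mem W hz), (abs_le.1 (hm z hz.1)).1]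

theorem le_of_subharmonicAcross_off_finite {K U P : Set ℂ} (hK : IsCompact K) (hU : IsOpen U)
    (hUK : U ⊆ K) (hP : P.Finite) (hg : ConvexOn ℝ univ g) (husc : UpperSemicontinuousOn W (K \ P))
    (hbdd : BddAbove (W '' (K \ P))) (hh : ContinuousOn h K)
    (hbdry : ∀ z ∈ (K \ U) \ P, W z ≤ h z) (hharm : HarmonicOnNhd h (U \ P))
    (hW : ∀ z ∈ U \ P, SubharmonicAcrossAt W g z) {z : ℂ} (hz : z ∈ K \ P) : W z ≤ h z := by
  classical
  obtain ⟨β, hβ0, hβharm, hβtop⟩ := exists_logBarrier hP hK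
  refine le_of_forall_pos_le_add_mul (l := β z) fun η hη => ?_
  -- With `P.piecewise (h + η • β) W` in place of `W`, the difference vanishes on `P`, where `β` is
  -- infinite.
  suffices P.piecewise (h + η • β) W z ≤ (h + η • β) z by
    rwa [piecewise_eq_of_notMem _ _ _ hz.2] at this
  have hβc : ContinuousOn (η • β) (K \ P) := fun y hy =>
    ((hβharm y hy.2).1.continuousAt.const_smul η).continuousWithinAt
  have hηtop (a : ℂ) (ha : a ∈ P) : Tendsto (η • β) (𝓝[K \ P] a) atTop :=
    ((hβtop a ha).mono_left
      (nhdsWithin_mono a fun x hx hxa => hx.2 (hxa ▸ ha))).const_mul_atTop hη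
  refine le_of_subharmonicAcross (U := U \ P) hK (hU.sdiff hP.isClosed) (sdiff_subset.trans hUK) hg
    (upperSemicontinuousOn_piecewise_sub_add hK hP.isClosed husc hbdd hh hβc hηtop)
    (fun y hy => ?_) (fun y hy => (hharm y hy).add (hβharm y hy.2).const_smul) (fun y hy => ?_) hz.1
  · by_cases hyP : y ∈ P
    · rw [piecewise_eq_of_mem _ _ _ hyP]
    · rw [piecewise_eq_of_notMem _ _ _ hyP]
      exact (hbdry y ⟨⟨hy.1, fun hyU => hy.2 ⟨hyU, hyP⟩⟩, hyP⟩).trans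
        (le_add_of_nonneg_right (mul_nonneg hη.le (hβ0 y hy.1)))
  · refine (hW y hy).congr (eventually_of_mem (hP.isClosed.isOpen_compl.mem_nhds hy.2) ?_)
    exact fun x hx => (piecewise_eq_of_notMem _ _ _ hx).symm

end MaximumPrinciple

section Liouville

open InnerProductSpace

variable {W g : ℂ → ℝ} {P : Set ℂ} {p : ℂ}

theorem le_add_mul_log_of_subharmonicAcross_off_finite (hP : P.Finite) (hg : ConvexOn ℝ univ g)
    (husc : UpperSemicontinuousOn W Pᶜ) (hbdd : BddAbove (W '' Pᶜ))
    (hW : ∀ z ∈ Pᶜ, SubharmonicAcrossAt W g z) {ρ A η : ℝ} (hρ : 0 < ρ)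
    (hA : ∀ z ∈ Metric.closedBall p ρ, z ∈ Pᶜ → W z ≤ A) (hη : 0 < η) {z : ℂ} (hz : z ∈ Pᶜ)
    (hzρ : z ∉ Metric.ball p ρ) : W z ≤ A + η * (Real.log ‖z - p‖ - Real.log ρ) := by
  have hzρ' : ρ ≤ ‖z - p‖ := by rwa [mem_ball_iff_norm, not_lt] at hzρ
  obtain ⟨C, hC⟩ := hbdd
  have hlim : Tendsto (fun R => A + η * (Real.log R - Real.log ρ)) atTop atTop :=
    tendsto_atTop_add_const_left _ A
      ((tendsto_atTop_add_const_right _ (-Real.log ρ) Real.tendsto_log_atTop).const_mul_atTop hη)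
  obtain ⟨R, hCR, hzR⟩ := ((hlim.eventually_ge_atTop C).and (eventually_ge_atTop ‖z - p‖)).exists
  have hne (y : ℂ) (hy : y ∉ Metric.ball p ρ) : y ≠ p := fun h => hy (h ▸ Metric.mem_ball_self hρ)
  have hharm (y : ℂ) (hy : y ≠ p) :
      HarmonicAt (fun y => A + η * (Real.log ‖y - p‖ - Real.log ρ)) y := by
    have hlog : HarmonicAt (fun y => Real.log ‖y - p‖) y :=
      AnalyticAt.harmonicAt_log_norm (by fun_prop) (sub_ne_zero.2 hy)
    exact (harmonicAt_const A).add ((hlog.sub (harmonicAt_const _)).const_smul (c := η))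
  have hbdry (y : ℂ) (hyP : y ∈ Pᶜ) (hyρ : y ∉ Metric.ball p ρ)
      (hyU : y ∉ Metric.ball p R \ Metric.closedBall p ρ) :
      W y ≤ A + η * (Real.log ‖y - p‖ - Real.log ρ) := by
    rw [mem_ball_iff_norm, not_lt] at hyρ
    by_cases hy : y ∈ Metric.closedBall p ρ
    · exact (hA y hy hyP).trans (le_add_of_nonneg_right
        (mul_nonneg hη.le (sub_nonneg.2 (Real.log_le_log hρ hyρ))))
    · have hyR : R ≤ ‖y - p‖ := by
        by_contra! hlt
        exact hyU ⟨mem_ball_iff_norm.2 hlt, hy⟩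
      have hlog : Real.log R ≤ Real.log ‖y - p‖ :=
        Real.log_le_log (hρ.trans_le (hzρ'.trans hzR)) hyR
      calc W y ≤ A + η * (Real.log R - Real.log ρ) := (hC (mem_image_of_mem W hyP)).trans hCR
        _ ≤ A + η * (Real.log ‖y - p‖ - Real.log ρ) := by gcongr
  exact le_of_subharmonicAcross_off_finite
    ((isCompact_closedBall p R).diff Metric.isOpen_ball)
    (Metric.isOpen_ball.sdiff Metric.isClosed_closedBall)
    (sdiff_subset_sdiff Metric.ball_subset_closedBall Metric.ball_subset_closedBall) hP hg
    (husc.mono fun y hy => hy.2) ⟨C, forall_mem_image.2 fun y hy => hC (mem_image_of_mem W hy.2)⟩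
    (fun y hy => (hharm y (hne y hy.2)).1.continuousAt.continuousWithinAt)
    (fun y hy => hbdry y hy.2 hy.1.1.2 hy.1.2)
    (fun y hy => hharm y (hne y fun hyρ => hy.1.2 (Metric.ball_subset_closedBall hyρ)))
    (fun y hy => hW y hy.2) ⟨⟨mem_closedBall_iff_norm.2 hzR, hzρ⟩, hz⟩

theorem nonpos_of_subharmonicAcross_off_finite (hP : P.Finite) (hg : ConvexOn ℝ univ g)
    (husc : UpperSemicontinuousOn W Pᶜ) (hbdd : BddAbove (W '' Pᶜ))
    (hW : ∀ z ∈ Pᶜ, SubharmonicAcrossAt W g z) (hp : ∀ ε > 0, ∀ᶠ z in 𝓝[Pᶜ] p, W z ≤ ε) {z : ℂ}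
    (hz : z ∈ Pᶜ) : W z ≤ 0 := by
  refine le_of_forall_pos_le_add fun ε hε => ?_
  rw [zero_add]
  obtain ⟨ρ, hρ, hWρ⟩ := Metric.nhds_basis_closedBall.eventually_iff.1
    (eventually_nhdsWithin_iff.1 (hp ε hε))
  by_cases hzρ : z ∈ Metric.closedBall p ρ
  · exact hWρ hzρ hz
  · exact le_of_forall_pos_le_add_mul fun η hη =>
      le_add_mul_log_of_subharmonicAcross_off_finite hP hg husc hbdd hW hρ
        (fun _ hy => hWρ hy) hη hz fun h => hzρ (Metric.ball_subset_closedBall h)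

end Liouville

section TransverseSubharmonicity

open InnerProductSpace

variable {F : ℂ → ℝ} {D : Set ℂ}

/-- `F` is transversely subharmonic on `D`: it is continuous and asymptotically subharmonic off the
real axis, while at the points of the axis it is only known to be differentiable in the vertical
direction. This is a neighbourhood of a point of a segment in flattened coordinates. -/
structure IsTransverselySubharmonicOn (F : ℂ → ℝ) (D : Set ℂ) : Prop where
  continuousAt : ∀ z ∈ D, z.im ≠ 0 → ContinuousAt F z
  asympSubharmonicAt : ∀ z ∈ D, z.im ≠ 0 → AsympSubharmonicAt F z
  differentiableAt : ∀ x : ℝ, (x : ℂ) ∈ D → DifferentiableAt ℝ (fun t : ℝ => F (x + t * I)) 0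

theorem IsTransverselySubharmonicOn.mono {D' : Set ℂ} (hF : IsTransverselySubharmonicOn F D)
    (h : D' ⊆ D) : IsTransverselySubharmonicOn F D' where
  continuousAt z hz := hF.continuousAt z (h hz)
  asympSubharmonicAt z hz := hF.asympSubharmonicAt z (h hz)
  differentiableAt x hx := hF.differentiableAt x (h hx)

theorem convexOn_abs_im : ConvexOn ℝ univ fun z : ℂ => |z.im| :=
  (convexOn_norm convex_univ).comp_linearMap imLm

theorem hasKinkAt_abs_im (x : ℝ) : HasKinkAt (fun z => |z.im|) I x := by
  refine ⟨2, two_pos, fun t ht => ?_⟩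
  simp [secondDiff, abs_of_pos ht, two_mul]

theorem IsTransverselySubharmonicOn.subharmonicAcrossAt (hF : IsTransverselySubharmonicOn F D)
    {z : ℂ} (hz : z ∈ D) : SubharmonicAcrossAt F (fun z => |z.im|) z := by
  rcases eq_or_ne z.im 0 with him | him
  · obtain ⟨x, rfl⟩ : ∃ x : ℝ, z = x := ⟨z.re, Complex.ext rfl (by simpa using him)⟩
    exact .inr ⟨I, hasKinkAt_abs_im x, by simpa using hF.differentiableAt x hz⟩
  · exact .inl (hF.asympSubharmonicAt z hz him)

/-- The harmonic majorant of the gap estimate: `A` plus `C - A` times the harmonic function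
`(r² + y² - (x - m)²) / r²`, which is nonnegative on the strip `|x - m| ≤ r`, at least `1` where
`x = m` or `|y| = r`, and small near the points at distance `r` from `m` on the axis. -/
noncomputable def gapMajorant (A C r m : ℝ) (z : ℂ) : ℝ :=
  A + (C - A) / r ^ 2 * (r ^ 2 + z.im ^ 2 - (z.re - m) ^ 2)

theorem harmonicAt_gapMajorant (A C r m : ℝ) (z : ℂ) : HarmonicAt (gapMajorant A C r m) z := by
  have hre : HarmonicAt (fun z : ℂ => ((r : ℂ) ^ 2 - (z - m) ^ 2).re) z :=
    AnalyticAt.harmonicAt_re (by fun_prop)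
  convert! (harmonicAt_const A).add (hre.const_smul (c := (C - A) / r ^ 2)) using 1
  ext y
  simp only [gapMajorant, sq, Pi.add_apply, Pi.smul_apply, smul_eq_mul, sub_re, sub_im, mul_re,
    ofReal_re, ofReal_im]
  ring

theorem left_le_gapMajorant {A C r m : ℝ} (hAC : A ≤ C) {z : ℂ} (hm : |z.re - m| ≤ r) :
    A ≤ gapMajorant A C r m z := by
  have hsq : (z.re - m) ^ 2 ≤ r ^ 2 := sq_le_sq' (abs_le.1 hm).1 (abs_le.1 hm).2
  exact le_add_of_nonneg_right (mul_nonneg (div_nonneg (sub_nonneg.2 hAC) (sq_nonneg r))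
    (by linarith [sq_nonneg z.im]))

theorem right_le_gapMajorant {A C r m : ℝ} (hr : 0 < r) (hAC : A ≤ C) {z : ℂ}
    (hz : (z.re - m) ^ 2 ≤ z.im ^ 2) : C ≤ gapMajorant A C r m z := by
  have hle : (C - A) / r ^ 2 * r ^ 2 ≤ (C - A) / r ^ 2 * (r ^ 2 + z.im ^ 2 - (z.re - m) ^ 2) :=
    mul_le_mul_of_nonneg_left (by linarith) (div_nonneg (sub_nonneg.2 hAC) (sq_nonneg r))
  rw [div_mul_cancel₀ _ (by positivity)] at hle
  rw [gapMajorant]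
  linarith

theorem IsTransverselySubharmonicOn.upperSemicontinuousOn
    (hF : IsTransverselySubharmonicOn F D)
    (husc : ∀ x : ℝ, (x : ℂ) ∈ D → UpperSemicontinuousAt F x) : UpperSemicontinuousOn F D := by
  intro z hz
  rcases eq_or_ne z.im 0 with him | him
  · obtain ⟨x, rfl⟩ : ∃ x : ℝ, z = x := ⟨z.re, Complex.ext rfl (by simpa using him)⟩
    exact (husc x hz).upperSemicontinuousWithinAt D
  · exact (hF.continuousAt z hz him).continuousWithinAt.upperSemicontinuousWithinAt

theorem IsTransverselySubharmonicOn.le_gapMajorant {a b r m A C : ℝ} (hr : 0 < r)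
    (hF : IsTransverselySubharmonicOn F (Icc a b ×ℂ Icc (-r) r))
    (husc : ∀ x ∈ Ioo a b, UpperSemicontinuousAt F x) (hm : ∀ x ∈ Icc a b, |x - m| ≤ r)
    (hAC : A ≤ C) (hC : ∀ z ∈ Icc a b ×ℂ Icc (-r) r, F z ≤ C)
    (hside : ∀ x ∈ ({a, b} : Set ℝ), x = m ∨ ∀ t ∈ Icc (-r) r, F (x + t * I) ≤ A) {z : ℂ}
    (hz : z ∈ Ioo a b ×ℂ Icc (-r) r) : F z ≤ gapMajorant A C r m z := by
  have hUK : Ioo a b ×ℂ Ioo (-r) r ⊆ Icc a b ×ℂ Icc (-r) r :=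
    fun y hy => ⟨Ioo_subset_Icc_self hy.1, Ioo_subset_Icc_self hy.2⟩
  have husc' : UpperSemicontinuousOn F
      ((Icc a b ×ℂ Icc (-r) r) \ {(a : ℂ), (b : ℂ)}) := by
    refine (hF.mono sdiff_subset).upperSemicontinuousOn fun x hx => husc x ?_
    exact ⟨hx.1.1.1.lt_of_ne fun h => hx.2 (.inl (h ▸ rfl)),
      hx.1.1.2.lt_of_ne fun h => hx.2 (.inr (h ▸ rfl))⟩
  have hbdry (y : ℂ) (hy : y ∈ Icc a b ×ℂ Icc (-r) r) (hyU : y ∉ Ioo a b ×ℂ Ioo (-r) r) :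
      F y ≤ gapMajorant A C r m y := by
    by_cases hedge : y.im ∈ Ioo (-r) r
    · have hre : y.re ∈ ({a, b} : Set ℝ) := by
        by_contra hre
        exact hyU ⟨⟨hy.1.1.lt_of_ne fun h => hre (.inl h.symm),
          hy.1.2.lt_of_ne fun h => hre (.inr h)⟩, hedge⟩
      rcases hside _ hre with h | h
      · exact (hC y hy).trans (right_le_gapMajorant hr hAC (by simpa [h] using sq_nonneg y.im))
      · exact (re_add_im y ▸ h _ hy.2).trans (left_le_gapMajorant hAC (hm _ hy.1))
    · refine (hC y hy).trans (right_le_gapMajorant hr hAC (sq_le_sq.2 ?_))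
      exact (hm _ hy.1).trans (le_abs'.2 (by
        by_contra! hlt
        exact hedge hlt))
  have hzP : z ∉ ({(a : ℂ), (b : ℂ)} : Set ℂ) := by
    rintro (rfl | rfl)
    exacts [lt_irrefl a hz.1.1, lt_irrefl b hz.1.2]
  exact le_of_subharmonicAcross_off_finite (isCompact_Icc.reProdIm isCompact_Icc)
    (isOpen_Ioo.reProdIm isOpen_Ioo) hUK (toFinite _) convexOn_abs_im husc'
    ⟨C, forall_mem_image.2 fun y hy => hC y hy.1⟩
    (fun y _ => (harmonicAt_gapMajorant A C r m y).1.continuousAt.continuousWithinAt)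
    (fun y hy => hbdry y hy.1.1 hy.1.2) (fun y _ => harmonicAt_gapMajorant A C r m y)
    (fun y hy => hF.subharmonicAcrossAt (hUK hy.1)) ⟨⟨Ioo_subset_Icc_self hz.1, hz.2⟩, hzP⟩

end TransverseSubharmonicity

section UpperSemicontinuity

variable {F : ℂ → ℝ} {D : Set ℂ}

theorem exists_gap {α : Type*} [ConditionallyCompleteLinearOrder α] [TopologicalSpace α]
    [OrderTopology α] {E : Set α} (hE : IsClosed E) {a₀ b₀ x : α} (ha₀ : a₀ ∈ E) (hb₀ : b₀ ∈ E)
    (hx : x ∈ Ioo a₀ b₀) (hxE : x ∉ E) :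
    ∃ a ∈ E, ∃ b ∈ E, x ∈ Ioo a b ∧ Icc a b ⊆ Icc a₀ b₀ ∧ Disjoint (Ioo a b) E := by
  obtain ⟨a, ⟨haE, haI⟩, hamax⟩ := (isCompact_Icc.inter_left hE).exists_isGreatest
    ⟨a₀, ha₀, left_mem_Icc.2 hx.1.le⟩
  obtain ⟨b, ⟨hbE, hbI⟩, hbmin⟩ := (isCompact_Icc.inter_left hE).exists_isLeast
    ⟨b₀, hb₀, right_mem_Icc.2 hx.2.le⟩
  refine ⟨a, haE, b, hbE, ⟨haI.2.lt_of_ne fun h => hxE (h ▸ haE),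
    hbI.1.lt_of_ne' fun h => hxE (h ▸ hbE)⟩, Icc_subset_Icc haI.1 hbI.2,
    disjoint_left.2 fun y hy hyE => ?_⟩
  rcases le_total y x with hyx | hxy
  · exact (hamax ⟨hyE, haI.1.trans hy.1.le, hyx⟩).not_gt hy.1
  · exact (hbmin ⟨hyE, hxy, hy.2.le.trans hbI.2⟩).not_gt hy.2

theorem exists_box_of_eventually_nhds {p : ℂ → Prop} {w : ℂ} (h : ∀ᶠ z in 𝓝 w, p z) :
    ∃ r > 0, ∀ z : ℂ, |z.re - w.re| ≤ r → |z.im - w.im| ≤ r → p z := by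
  obtain ⟨ε, hε, hball⟩ := Metric.eventually_nhds_iff.1 h
  refine ⟨ε / 3, by positivity, fun z hre him => hball ?_⟩
  rw [Complex.dist_eq]
  have := norm_le_abs_re_add_abs_im (z - w)
  rw [sub_re, sub_im] at this
  linarith

theorem gapMajorant_le {A C r m p : ℝ} (hAC : A ≤ C) (hm : |p - m| = r) {z : ℂ} :
    gapMajorant A C r m z ≤ A + (C - A) / r ^ 2 * (2 * r * |z.re - p| + z.im ^ 2) := by
  have hsq : r ^ 2 - (z.re - m) ^ 2 ≤ 2 * r * |z.re - p| := by
    have := neg_abs_le ((z.re - p) * (p - m))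
    rw [abs_mul, hm] at this
    rw [← hm, sq_abs, hm]
    nlinarith [sq_nonneg (z.re - p)]
  exact add_le_add_right (mul_le_mul_of_nonneg_left (by linarith)
    (div_nonneg (sub_nonneg.2 hAC) (sq_nonneg r))) A

theorem exists_gap_within_radius {E : Set ℝ} (hE : IsClosed E) {p r x : ℝ} (hp : p ∈ E)
    (hx : x ∈ Ioo (p - r) (p + r)) (hxE : x ∉ E) :
    ∃ m, |p - m| = r ∧ ∃ a ∈ insert m E, ∃ b ∈ insert m E, x ∈ Ioo a b ∧
      Icc a b ⊆ Icc (p - r) (p + r) ∧ (∀ y ∈ Icc a b, |y - m| ≤ r) ∧ Disjoint (Ioo a b) E := by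
  have hr : 0 < r := by linarith [hx.1.trans hx.2]
  obtain ⟨m, hm, hIcc, hxm⟩ : ∃ m, |p - m| = r ∧ uIcc p m ⊆ Icc (p - r) (p + r) ∧
      x ∈ Ioo (min p m) (max p m) := by
    rcases (ne_of_mem_of_not_mem hp hxE).lt_or_gt with h | h
    · refine ⟨p + r, by simp [abs_of_pos hr], ?_, by simpa [hr.le] using ⟨h, hx.2⟩⟩
      exact uIcc_subset_Icc ⟨by linarith, by linarith⟩ ⟨by linarith, le_rfl⟩
    · refine ⟨p - r, by simp [abs_of_pos hr], ?_, by simpa [hr.le] using ⟨hx.1, h⟩⟩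
      exact uIcc_subset_Icc ⟨by linarith, by linarith⟩ ⟨le_rfl, by linarith⟩
  have hxmE : x ∉ insert m E := by
    rintro (rfl | h)
    · rcases le_total p x with h | h <;> simp [h] at hxm
    · exact hxE h
  obtain ⟨a, ha, b, hb, hxab, hab, hgap⟩ := exists_gap (isClosed_singleton.union hE)
    (min_rec' (· ∈ insert m E) (mem_insert_of_mem m hp) (mem_insert m E))
    (max_rec' (· ∈ insert m E) (mem_insert_of_mem m hp) (mem_insert m E)) hxm hxmE
  refine ⟨m, hm, a, ha, b, hb, hxab, hab.trans hIcc, fun y hy => ?_,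
    hgap.mono_right (subset_insert m E)⟩
  rw [← hm, abs_sub_comm y, abs_sub_comm p]
  exact abs_sub_right_of_mem_uIcc (hab hy)

theorem IsTransverselySubharmonicOn.le_of_gap {E : Set ℝ} (hE : IsClosed E) {p r A C : ℝ}
    (hF : IsTransverselySubharmonicOn F (Icc (p - r) (p + r) ×ℂ Icc (-r) r))
    (hp : p ∈ E) (husc : ∀ x ∈ Icc (p - r) (p + r) \ E, UpperSemicontinuousAt F x) (hAC : A ≤ C)
    (hC : ∀ z ∈ Icc (p - r) (p + r) ×ℂ Icc (-r) r, F z ≤ C)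
    (hA : ∀ z ∈ (Icc (p - r) (p + r) ∩ E) ×ℂ Icc (-r) r, F z ≤ A) {z : ℂ}
    (hz : z ∈ Ioo (p - r) (p + r) ×ℂ Icc (-r) r) :
    F z ≤ A + (C - A) / r ^ 2 * (2 * r * |z.re - p| + z.im ^ 2) := by
  have hr : 0 < r := by linarith [hz.1.1.trans hz.1.2]
  by_cases hzE : z.re ∈ E
  · have hC0 : 0 ≤ C - A := sub_nonneg.2 hAC
    exact (hA z ⟨⟨Ioo_subset_Icc_self hz.1, hzE⟩, hz.2⟩).trans
      (le_add_of_nonneg_right (by positivity))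
  obtain ⟨m, hm, a, ha, b, hb, hzab, hab, habm, hgap⟩ := exists_gap_within_radius hE hp hz.1 hzE
  have hbox : Icc a b ×ℂ Icc (-r) r ⊆ Icc (p - r) (p + r) ×ℂ Icc (-r) r :=
    fun y hy => ⟨hab hy.1, hy.2⟩
  have hside (x : ℝ) (hx : x ∈ ({a, b} : Set ℝ)) :
      x = m ∨ ∀ t ∈ Icc (-r) r, F (x + t * I) ≤ A := by
    have hle : a ≤ b := (hzab.1.trans hzab.2).le
    obtain ⟨hxI, hxE⟩ : x ∈ Icc a b ∧ x ∈ insert m E := by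
      rcases hx with rfl | rfl
      exacts [⟨left_mem_Icc.2 hle, ha⟩, ⟨right_mem_Icc.2 hle, hb⟩]
    refine hxE.imp_right fun hxE t ht => hA _ ?_
    simpa [mem_reProdIm, hxE] using And.intro (hab hxI) ht
  refine ((hF.mono hbox).le_gapMajorant hr (fun x hx => husc x ⟨hab (Ioo_subset_Icc_self hx), ?_⟩)
    habm hAC (fun y hy => hC y (hbox hy)) hside ⟨hzab, hz.2⟩).trans (gapMajorant_le hAC hm)
  exact disjoint_left.1 hgap hx

theorem IsTransverselySubharmonicOn.upperSemicontinuousAt_of_eventually_le {E : Set ℝ}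
    (hE : IsClosed E) {p C : ℝ} (hF : IsTransverselySubharmonicOn F D) (hD : D ∈ 𝓝 (p : ℂ))
    (hp : p ∈ E) (husc : ∀ᶠ x : ℝ in 𝓝 p, x ∉ E → UpperSemicontinuousAt F x)
    (hC : ∀ z ∈ D, F z ≤ C) (hA : ∀ A > F p, ∀ᶠ z in 𝓝 (p : ℂ), z.re ∈ E → F z ≤ A) :
    UpperSemicontinuousAt F p := by
  intro e he
  obtain ⟨A, hpA, hAe⟩ := exists_between he
  have husc' : ∀ᶠ z : ℂ in 𝓝 (p : ℂ), z.re ∉ E → UpperSemicontinuousAt F z.re :=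
    (Complex.continuous_re.tendsto' (p : ℂ) p (ofReal_re p)).eventually husc
  obtain ⟨r, hr, hbox⟩ := exists_box_of_eventually_nhds
    ((eventually_mem_set.2 hD).and (husc'.and (hA A hpA)))
  have hbox' (z : ℂ) (hz : z ∈ Icc (p - r) (p + r) ×ℂ Icc (-r) r) :=
    hbox z (by simpa [abs_le, sub_le_iff_le_add, add_comm] using hz.1)
      (by simpa [abs_le] using hz.2)
  have hmajorant : Tendsto (fun z : ℂ => A + (max A C - A) / r ^ 2 *
      (2 * r * |z.re - p| + z.im ^ 2)) (𝓝 p) (𝓝 A) :=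
    Continuous.tendsto' (by fun_prop) _ _ (by simp)
  have hnear : ∀ᶠ z : ℂ in 𝓝 (p : ℂ), z ∈ Ioo (p - r) (p + r) ×ℂ Ioo (-r) r :=
    (isOpen_Ioo.reProdIm isOpen_Ioo).mem_nhds (by simp [mem_reProdIm, hr])
  filter_upwards [hnear, hmajorant.eventually_lt_const hAe] with z hz hze
  refine lt_of_le_of_lt (IsTransverselySubharmonicOn.le_of_gap hE
    (hF.mono fun y hy => (hbox' y hy).1) hp (fun x hx => ?_) (le_max_left A C)
    (fun y hy => (hC y (hbox' y hy).1).trans (le_max_right A C))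
    (fun y hy => (hbox' y ⟨hy.1.1, hy.2⟩).2.2 hy.1.2) ⟨hz.1, Ioo_subset_Icc_self hz.2⟩) hze
  exact (hbox' x ⟨hx.1, by simp [hr.le]⟩).2.1 hx.2

theorem IsTransverselySubharmonicOn.eventually_le_of_uniformly_lipschitz {E : Set ℝ} {p M δ : ℝ}
    (hF : IsTransverselySubharmonicOn F D) (hD : D ∈ 𝓝 (p : ℂ)) (hp : p ∈ E) (hδ : 0 < δ)
    (hlip : ∀ᶠ x : ℝ in 𝓝 p, x ∈ E → ∀ t : ℝ, |t| < δ → |F (x + t * I) - F x| ≤ M * |t|)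
    {A : ℝ} (hA : F p < A) : ∀ᶠ z in 𝓝 (p : ℂ), z.re ∈ E → F z ≤ A := by
  have hslope : ∀ᶠ s : ℝ in 𝓝 0, M * |s| < (A - F p) / 4 :=
    (Continuous.tendsto' (by fun_prop) 0 0 (by simp)).eventually_lt_const (by linarith)
  have hmem : ∀ᶠ s : ℝ in 𝓝 0, (p + s * I : ℂ) ∈ D :=
    (Continuous.tendsto' (by fun_prop) 0 (p : ℂ) (by simp)).eventually_mem hD
  have hsmall : ∀ᶠ s : ℝ in 𝓝 0, |s| < δ :=
    (Continuous.tendsto' (by fun_prop) 0 0 abs_zero).eventually_lt_const hδ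
  obtain ⟨s, ⟨hsM, hsD, hsδ⟩, hs⟩ := (hslope.and (hmem.and hsmall)).filter_mono
    (nhdsWithin_le_nhds (s := Ioi 0)) |>.and self_mem_nhdsWithin |>.exists
  have hre : Tendsto re (𝓝 (p : ℂ)) (𝓝 p) := Complex.continuous_re.tendsto' _ _ (ofReal_re p)
  have him : Tendsto (fun z : ℂ => M * |z.im|) (𝓝 (p : ℂ)) (𝓝 0) :=
    Continuous.tendsto' (by fun_prop) _ _ (by simp)
  have hlevel : ∀ᶠ z : ℂ in 𝓝 (p : ℂ), F (z.re + s * I) < F (p + s * I) + (A - F p) / 4 := by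
    refine Tendsto.eventually_lt_const (lt_add_of_pos_right _ (by linarith))
      ((hF.continuousAt _ hsD (by simpa using ne_of_gt hs)).tendsto.comp ?_)
    exact Continuous.tendsto' (by fun_prop) _ _ (by simp)
  have himδ : ∀ᶠ z : ℂ in 𝓝 (p : ℂ), |z.im| < δ :=
    (Continuous.tendsto' (by fun_prop) _ 0 (by simp)).eventually_lt_const hδ
  filter_upwards [hre.eventually hlip, him.eventually_lt_const (by linarith : 0 < (A - F p) / 4),
    hlevel, himδ] with z hz hzM hzs hzδ hzE
  have hzF := (abs_le.1 (hz hzE _ hzδ)).2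
  rw [re_add_im] at hzF
  have hz_s := (abs_le.1 (hz hzE s hsδ)).1
  have hp_s := (abs_le.1 (hlip.self_of_nhds hp s hsδ)).2
  linarith

theorem exists_nat_forall_abs_sub_le {f : ℝ → ℝ} (hf : DifferentiableAt ℝ f 0) (R : ℝ) :
    ∃ n : ℕ, ∀ s t : ℝ, |s| < R / (n + 1) → |t| < R / (n + 1) → |f t - f s| ≤ n * (|t| + |s|) := by
  obtain ⟨M, hM⟩ := hf.isBigO_sub.bound
  obtain ⟨ε, hε, hball⟩ := Metric.eventually_nhds_iff.1 hM
  obtain ⟨n, hn⟩ := exists_nat_gt (max M (R / ε))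
  rw [max_lt_iff, div_lt_iff₀ hε] at hn
  have hRn : R / (n + 1) < ε := by
    rw [div_lt_iff₀ (by positivity)]
    linarith
  have hlip (t : ℝ) (ht : |t| < R / (n + 1)) : |f t - f 0| ≤ n * |t| := by
    refine (hball (by simpa using ht.trans hRn)).trans ?_
    simpa using mul_le_mul_of_nonneg_right hn.1.le (abs_nonneg t)
  refine ⟨n, fun s t hs ht => ?_⟩
  rw [mul_add]
  exact (abs_sub_le _ (f 0) _).trans (add_le_add (hlip t ht) (abs_sub_comm (f s) _ ▸ hlip s hs))

theorem exists_uniformly_lipschitz {X : Type*} [TopologicalSpace X] [BaireSpace X] [Nonempty X]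
    {f : X → ℝ → ℝ} {R : ℝ} (hR : 0 < R)
    (hcont : ∀ t ≠ 0, |t| < R → Continuous fun x => f x t)
    (hdiff : ∀ x, DifferentiableAt ℝ (f x) 0) :
    ∃ M, ∃ δ > 0, (interior {x | ∀ t, |t| < δ → |f x t - f x 0| ≤ M * |t|}).Nonempty := by
  -- Comparing two nonzero times keeps the sets closed, as `f · 0` need not be continuous.
  set S : ℕ → Set ℝ := fun n => {t | t ≠ 0 ∧ |t| < R / (n + 1)}
  set A : ℕ → Set X := fun n => {x | ∀ s ∈ S n, ∀ t ∈ S n, |f x t - f x s| ≤ n * (|t| + |s|)}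
  have hSR (n : ℕ) (t : ℝ) (ht : t ∈ S n) : |t| < R :=
    ht.2.trans_le (div_le_self hR.le (by simp))
  have hclosed (n : ℕ) : IsClosed (A n) := by
    simp only [A, ofPred_forall]
    refine isClosed_iInter fun s => isClosed_iInter fun hs => isClosed_iInter fun t =>
      isClosed_iInter fun ht => isClosed_le (.abs (.sub ?_ ?_)) continuous_const
    exacts [hcont t ht.1 (hSR n t ht), hcont s hs.1 (hSR n s hs)]
  have hcover : ⋃ n, A n = univ := by
    refine iUnion_eq_univ_iff.2 fun x => ?_
    obtain ⟨n, hn⟩ := exists_nat_forall_abs_sub_le (hdiff x) R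
    exact ⟨n, fun s hs t ht => hn s t hs.2 ht.2⟩
  obtain ⟨n, hn⟩ := nonempty_interior_of_iUnion_of_closed hclosed hcover
  refine ⟨n, R / (n + 1), by positivity, hn.mono (interior_mono fun x hx t ht => ?_)⟩
  rcases eq_or_ne t 0 with rfl | ht0
  · simp
  have hlim : Tendsto (fun s => |f x t - f x s|) (𝓝[≠] 0) (𝓝 |f x t - f x 0|) :=
    ((hdiff x).continuousAt.tendsto.mono_left nhdsWithin_le_nhds).const_sub _ |>.abs
  have hbound : Tendsto (fun s : ℝ => n * (|t| + |s|)) (𝓝[≠] 0) (𝓝 (n * |t|)) :=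
    (Continuous.tendsto' (by fun_prop) 0 _ (by simp)).mono_left nhdsWithin_le_nhds
  have hsmall : ∀ᶠ s : ℝ in 𝓝 0, |s| < R / (n + 1) :=
    (Continuous.tendsto' (by fun_prop) 0 0 abs_zero).eventually_lt_const (by positivity)
  refine le_of_tendsto_of_tendsto hlim hbound ?_
  filter_upwards [self_mem_nhdsWithin, nhdsWithin_le_nhds hsmall] with s hs0 hs
  exact hx s ⟨hs0, hs⟩ t ⟨ht0, ht⟩

theorem IsTransverselySubharmonicOn.upperSemicontinuousAt (hF : IsTransverselySubharmonicOn F D)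
    (hD : IsOpen D) (hbdd : BddAbove (F '' D)) {x : ℝ} (hx : (x : ℂ) ∈ D) :
    UpperSemicontinuousAt F x := by
  obtain ⟨C, hC⟩ := hbdd
  by_contra hbad
  obtain ⟨R, hR, hbox⟩ := exists_box_of_eventually_nhds (hD.mem_nhds hx)
  set B : Set ℝ := {y ∈ Ioo (x - R) (x + R) | ¬ UpperSemicontinuousAt F y}
  have hxB : x ∈ B := ⟨by simp [hR], hbad⟩
  have hBR : closure B ⊆ Icc (x - R) (x + R) :=
    closure_minimal ((sep_subset _ _).trans Ioo_subset_Icc_self) isClosed_Icc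
  have hmem (y : ℝ) (hy : y ∈ closure B) (t : ℝ) (ht : |t| < R) : (y + t * I : ℂ) ∈ D :=
    hbox _ (by simpa [abs_le, sub_le_iff_le_add, add_comm] using hBR hy) (by simpa using ht.le)
  have : Nonempty (closure B) := ⟨x, subset_closure hxB⟩
  have : CompleteSpace (closure B) := isClosed_closure.completeSpace_coe
  have hcont (t : ℝ) (ht0 : t ≠ 0) (htR : |t| < R) :
      Continuous fun y : closure B => F ((y : ℝ) + t * I) :=
    continuous_iff_continuousAt.2 fun y => ContinuousAt.comp (g := F)
      (hF.continuousAt _ (hmem y y.2 t htR) (by simpa using ht0)) (by fun_prop)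
  obtain ⟨M, δ, hδ, ⟨w, hwB⟩, hw⟩ := exists_uniformly_lipschitz
    (f := fun (y : closure B) (t : ℝ) => F ((y : ℝ) + t * I)) hR hcont
    fun y => hF.differentiableAt y (by simpa using hmem y y.2 0 (by simpa using hR))
  obtain ⟨_, hsub, ⟨O, hO, rfl⟩, hwO⟩ := mem_interior.1 hw
  obtain ⟨q, hqO, hqB⟩ := mem_closure_iff.1 hwB O hO hwO
  have hqD : D ∈ 𝓝 (q : ℂ) := hD.mem_nhds (by
    simpa using hmem q (subset_closure hqB) 0 (by simpa using hR))
  have hlip : ∀ᶠ y : ℝ in 𝓝 q, y ∈ closure B →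
      ∀ t : ℝ, |t| < δ → |F (y + t * I) - F y| ≤ M * |t| := by
    filter_upwards [hO.mem_nhds hqO] with y hyO hyB t ht
    simpa using hsub (show ⟨y, hyB⟩ ∈ Subtype.val ⁻¹' O from hyO) t ht
  refine hqB.2 (hF.upperSemicontinuousAt_of_eventually_le isClosed_closure hqD
    (subset_closure hqB) ?_ (fun z hz => hC (mem_image_of_mem F hz)) fun A hA =>
      hF.eventually_le_of_uniformly_lipschitz hqD (subset_closure hqB) hδ hlip hA)
  filter_upwards [isOpen_Ioo.mem_nhds hqB.1] with y hy hyB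
  by_contra hbad
  exact hyB (subset_closure ⟨hy, hbad⟩)

end UpperSemicontinuity

section IsometricJump

variable {E : Type*} [NormedAddCommGroup E]

theorem hasDerivAt_of_tendsto_deriv_nhdsNE [NormedSpace ℝ E] {φ : ℝ → E} {x : ℝ} {d : E}
    (hdiff : ∀ᶠ t in 𝓝[≠] x, DifferentiableAt ℝ φ t) (hcont : ContinuousAt φ x)
    (hderiv : Tendsto (deriv φ) (𝓝[≠] x) (𝓝 d)) : HasDerivAt φ d x := by
  have hon : DifferentiableOn ℝ φ {t | DifferentiableAt ℝ φ t} :=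
    fun t ht => ht.differentiableWithinAt
  have hright : HasDerivWithinAt φ d (Ici x) x :=
    hasDerivWithinAt_Ici_of_tendsto_deriv hon hcont.continuousWithinAt
      (nhdsGT_le_nhdsNE x hdiff) (hderiv.mono_left (nhdsGT_le_nhdsNE x))
  have hleft : HasDerivWithinAt φ d (Iic x) x :=
    hasDerivWithinAt_Iic_of_tendsto_deriv hon hcont.continuousWithinAt
      (nhdsLT_le_nhdsNE x hdiff) (hderiv.mono_left (nhdsLT_le_nhdsNE x))
  simpa [Iic_union_Ici] using hleft.union hright

variable [InnerProductSpace ℝ E]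

/-- `f` and its derivative have one-sided limits at `0`, and one linear isometry carries the left
limits to the right limits. For `E = ℂ` and the isometry given by a phase factor this is the
matching condition along a normal to a segment, both derivatives being taken in the direction of
increasing `t`. -/
def HasIsometricJump (f : ℝ → E) : Prop :=
  ∃ (L : E →ₗᵢ[ℝ] E) (b db : E),
    Tendsto f (𝓝[<] 0) (𝓝 b) ∧ Tendsto (deriv f) (𝓝[<] 0) (𝓝 db) ∧
      Tendsto f (𝓝[>] 0) (𝓝 (L b)) ∧ Tendsto (deriv f) (𝓝[>] 0) (𝓝 (L db))

variable {f : ℝ → E}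

theorem HasIsometricJump.comp_mul_left (hf : HasIsometricJump f) {θ : ℝ} (hθ : 0 < θ) :
    HasIsometricJump fun t => f (θ * t) := by
  obtain ⟨L, b, db, hb, hdb, ha, hda⟩ := hf
  have hmul : Tendsto (θ * ·) (𝓝 0) (𝓝 0) := Continuous.tendsto' (by fun_prop) 0 0 (mul_zero θ)
  have hneg : Tendsto (θ * ·) (𝓝[<] 0) (𝓝[<] 0) :=
    tendsto_nhdsWithin_iff.2 ⟨hmul.mono_left nhdsWithin_le_nhds,
      eventually_nhdsWithin_of_forall fun t ht => mul_neg_of_pos_of_neg hθ ht⟩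
  have hpos : Tendsto (θ * ·) (𝓝[>] 0) (𝓝[>] 0) :=
    tendsto_nhdsWithin_iff.2 ⟨hmul.mono_left nhdsWithin_le_nhds,
      eventually_nhdsWithin_of_forall fun t ht => mul_pos hθ ht⟩
  have hderiv : deriv (fun t => f (θ * t)) = fun t => θ • deriv f (θ * t) :=
    funext fun t => deriv_comp_mul_left θ f t
  refine ⟨L, b, θ • db, hb.comp hneg, ?_, ha.comp hpos, ?_⟩
  · simpa only [hderiv, Function.comp_def] using (hdb.comp hneg).const_smul θ
  · simpa only [hderiv, map_smul, Function.comp_def] using (hda.comp hpos).const_smul θ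

theorem HasIsometricJump.exists_tendsto_norm_sq (hf : HasIsometricJump f) :
    ∃ l, Tendsto (fun t => ‖f t‖ ^ 2) (𝓝[≠] 0) (𝓝 l) := by
  obtain ⟨L, b, -, hb, -, ha, -⟩ := hf
  refine ⟨‖b‖ ^ 2, ?_⟩
  rw [← nhdsLT_sup_nhdsGT]
  exact (hb.norm.pow 2).sup (L.norm_map b ▸ ha.norm.pow 2)

theorem HasIsometricJump.exists_tendsto_inner_deriv (hf : HasIsometricJump f) :
    ∃ d, Tendsto (fun t => 2 * inner ℝ (f t) (deriv f t)) (𝓝[≠] 0) (𝓝 d) := by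
  obtain ⟨L, b, db, hb, hdb, ha, hda⟩ := hf
  refine ⟨2 * inner ℝ b db, ?_⟩
  rw [← nhdsLT_sup_nhdsGT]
  exact ((hb.inner hdb).const_mul 2).sup (L.inner_map_map b db ▸ (ha.inner hda).const_mul 2)

theorem HasIsometricJump.differentiableAt_norm_sq_extension (hf : HasIsometricJump f)
    (hdiff : ∀ᶠ t in 𝓝[≠] 0, DifferentiableAt ℝ f t) {w : ℝ → ℝ}
    (hw : ∀ᶠ t in 𝓝[≠] 0, w t = ‖f t‖ ^ 2)
    (hw₀ : Tendsto (fun t => ‖f t‖ ^ 2) (𝓝[≠] 0) (𝓝 (w 0))) : DifferentiableAt ℝ w 0 := by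
  have hderiv : ∀ᶠ t in 𝓝[≠] 0, HasDerivAt w (2 * inner ℝ (f t) (deriv f t)) t := by
    filter_upwards [hdiff, eventually_eventually_nhdsWithin.2 hw, self_mem_nhdsWithin]
      with t ht hwt ht0
    rw [isOpen_compl_singleton.nhdsWithin_eq ht0] at hwt
    exact ht.hasDerivAt.norm_sq.congr_of_eventuallyEq hwt
  obtain ⟨d, hd⟩ := hf.exists_tendsto_inner_deriv
  exact (hasDerivAt_of_tendsto_deriv_nhdsNE (hderiv.mono fun t ht => ht.differentiableAt)
    (continuousAt_iff_punctured_nhds.2 (hw₀.congr' (hw.mono fun t ht => ht.symm)))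
    (hd.congr' (hderiv.mono fun t ht => ht.deriv.symm))).differentiableAt

theorem hasIsometricJump_of_phase {f : ℝ → ℂ} {ζ : ℂ} (hζ : ‖ζ‖ = 1)
    (hf : ∃ a b, Tendsto f (𝓝[>] 0) (𝓝 a) ∧ Tendsto f (𝓝[<] 0) (𝓝 b) ∧ a = ζ * b)
    (hf' : ∃ a b, Tendsto (deriv f) (𝓝[>] 0) (𝓝 a) ∧ Tendsto (deriv f) (𝓝[<] 0) (𝓝 b) ∧
      a = ζ * b) : HasIsometricJump f := by
  obtain ⟨_, b, ha, hb, rfl⟩ := hf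
  obtain ⟨_, db, hda, hdb, rfl⟩ := hf'
  exact ⟨(rotation ⟨ζ, mem_sphere_zero_iff_norm.2 hζ⟩).toLinearIsometry, b, db, hb, hdb, ha, hda⟩

end IsometricJump

section Star

open scoped ComplexConjugate

variable {c e z : ℂ} {T : Finset ℂ}

theorem isClosed_segment {V : Type*} [AddCommGroup V] [Module ℝ V] [TopologicalSpace V]
    [IsTopologicalAddGroup V] [ContinuousSMul ℝ V] [T2Space V] (a b : V) :
    IsClosed (segment ℝ a b) := by
  rw [segment_eq_image_lineMap]
  exact (isCompact_Icc.image AffineMap.lineMap_continuous).isClosed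

theorem isClosed_convexJoin_singleton_finset (c : ℂ) (T : Finset ℂ) :
    IsClosed (convexJoin ℝ {c} (T : Set ℂ)) := by
  rw [convexJoin_singleton_left]
  exact T.finite_toSet.isClosed_biUnion fun e _ => isClosed_segment c e

theorem mem_convexJoin_singleton_finset :
    z ∈ convexJoin ℝ {c} (T : Set ℂ) ↔ ∃ e ∈ T, z ∈ segment ℝ c e := by
  simp [convexJoin_singleton_left]

theorem exists_sub_eq_smul_of_mem_segment (hz : z ∈ segment ℝ c e) (hc : z ≠ c) (he : z ≠ e) :
    ∃ θ ∈ Ioo (0 : ℝ) 1, z - c = θ • (e - c) := by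
  have := mem_openSegment_of_ne_left_right hc.symm he.symm hz
  rw [openSegment_eq_image'] at this
  obtain ⟨θ, hθ, rfl⟩ := this
  exact ⟨θ, hθ, add_sub_cancel_left c _⟩

theorem im_eq_zero_of_add_mul_sub_mem_segment {w : ℂ} (hz : z ∈ segment ℝ c e) (hc : z ≠ c)
    (hw : z + w * (z - c) ∈ segment ℝ c e) : w.im = 0 := by
  rw [segment_eq_image'] at hz hw
  obtain ⟨θ, -, rfl⟩ := hz
  obtain ⟨θ', -, hθ'⟩ := hw
  have hne : θ • (e - c) ≠ 0 := by simpa using hc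
  have hθ : θ ≠ 0 := left_ne_zero_of_smul hne
  have hw' : (1 + w) * θ = θ' := by
    refine mul_right_cancel₀ (right_ne_zero_of_smul hne) ?_
    simp only [real_smul] at hθ'
    linear_combination -hθ'
  simpa [hθ] using congrArg im hw'

theorem eventually_add_mul_sub_mem_segment (hz : z ∈ segment ℝ c e) (hc : z ≠ c) (he : z ≠ e) :
    ∀ᶠ w in 𝓝 (0 : ℂ), w.im = 0 → z + w * (z - c) ∈ segment ℝ c e := by
  obtain ⟨θ, ⟨hθ0, hθ1⟩, hθ⟩ := exists_sub_eq_smul_of_mem_segment hz hc he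
  have hpos : ∀ᶠ w in 𝓝 (0 : ℂ), 0 < (1 + w.re) * θ :=
    ContinuousAt.eventually_lt (by fun_prop) (by fun_prop) (by simpa using hθ0)
  have hlt : ∀ᶠ w in 𝓝 (0 : ℂ), (1 + w.re) * θ < 1 :=
    ContinuousAt.eventually_lt (by fun_prop) (by fun_prop) (by simpa using hθ1)
  filter_upwards [hpos, hlt] with w h0 h1 him
  rw [segment_eq_image']
  refine ⟨(1 + w.re) * θ, ⟨h0.le, h1.le⟩, ?_⟩
  obtain ⟨x, rfl⟩ : ∃ x : ℝ, w = x := ⟨w.re, Complex.ext rfl (by simpa using him)⟩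
  simp only [real_smul, ofReal_re, ofReal_mul, ofReal_add, ofReal_one] at hθ ⊢
  linear_combination -(1 + x : ℂ) * hθ

theorem tendsto_add_mul_const_nhds (z v : ℂ) : Tendsto (fun w => z + w * v) (𝓝 0) (𝓝 z) :=
  Continuous.tendsto' (by fun_prop) 0 z (by simp)

theorem eventually_add_mul_sub_notMem_segment (hz : z ∉ insert c (T : Set ℂ)) :
    ∀ᶠ w in 𝓝 (0 : ℂ), ∀ e ∈ T, z + w * (z - c) ∈ segment ℝ c e → w.im = 0 := by
  rw [Filter.eventually_all_finset]
  intro e _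
  by_cases hze : z ∈ segment ℝ c e
  · exact .of_forall fun w => im_eq_zero_of_add_mul_sub_mem_segment hze fun h => hz (.inl h)
  · filter_upwards [tendsto_add_mul_const_nhds z (z - c)
      ((isClosed_segment c e).isOpen_compl.mem_nhds hze)] with w hw hw'
    exact absurd hw' hw

theorem eventually_mem_convexJoin_iff_im_eq_zero
    (hz : z ∈ convexJoin ℝ {c} (T : Set ℂ) \ insert c T) :
    ∀ᶠ w in 𝓝 (0 : ℂ), z + w * (z - c) ∉ insert c (T : Set ℂ) ∧
      (z + w * (z - c) ∈ convexJoin ℝ {c} (T : Set ℂ) ↔ w.im = 0) := by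
  obtain ⟨e, heT, hze⟩ := mem_convexJoin_singleton_finset.1 hz.1
  have hvertex := tendsto_add_mul_const_nhds z (z - c)
    ((T.finite_toSet.insert c).isClosed.isOpen_compl.mem_nhds hz.2)
  filter_upwards [hvertex, eventually_add_mul_sub_notMem_segment hz.2,
    eventually_add_mul_sub_mem_segment hze (fun h => hz.2 (.inl h))
      fun h => hz.2 (.inr (h ▸ heT))] with w hwP hwoff hwon
  refine ⟨hwP, fun hw => ?_, fun him => mem_convexJoin_singleton_finset.2 ⟨e, heT, hwon him⟩⟩
  obtain ⟨e', he', hw'⟩ := mem_convexJoin_singleton_finset.1 hw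
  exact hwoff e' he' hw'

theorem tendsto_add_smul_I_mul_sub (hz : z ∈ convexJoin ℝ {c} (T : Set ℂ) \ insert c T) :
    Tendsto (fun t : ℝ => z + t • (I * (z - c))) (𝓝[≠] 0)
      (𝓝[(convexJoin ℝ {c} (T : Set ℂ))ᶜ] z) := by
  have hI : Tendsto (fun t : ℝ => t * I) (𝓝[≠] 0) (𝓝 0) :=
    (Continuous.tendsto' (by fun_prop) 0 0 (by simp)).mono_left nhdsWithin_le_nhds
  have hassoc (t : ℝ) : z + t • (I * (z - c)) = z + t * I * (z - c) := by
    rw [real_smul, mul_assoc]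
  simp only [hassoc]
  refine tendsto_nhdsWithin_iff.2 ⟨(tendsto_add_mul_const_nhds z (z - c)).comp hI, ?_⟩
  filter_upwards [hI.eventually (eventually_mem_convexJoin_iff_im_eq_zero hz),
    self_mem_nhdsWithin] with t ht ht0 hmem
  exact ht0 (by simpa using ht.2.1 hmem)

/-- The sum of the distances from `z` to the lines through `c` and the points of `T`, weighted by
the distances from `c` to these points. It is a convex function with a kink across each segment. -/
noncomputable def crossSum (c : ℂ) (T : Finset ℂ) (z : ℂ) : ℝ :=
  ∑ e ∈ T, |(conj (e - c) * (z - c)).im|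

theorem convexOn_abs_im_conj_mul_sub (a c : ℂ) :
    ConvexOn ℝ univ fun z => |(conj a * (z - c)).im| :=
  convexOn_abs_im.comp_affineMap
    ((LinearMap.mulLeft ℝ (conj a)).toAffineMap.comp (AffineMap.id ℝ ℂ - AffineMap.const ℝ ℂ c))

theorem convexOn_crossSum (c : ℂ) (T : Finset ℂ) : ConvexOn ℝ univ (crossSum c T) := by
  have hsum : crossSum c T = ∑ e ∈ T, fun z => |(conj (e - c) * (z - c)).im| := by
    ext z
    simp [crossSum]
  rw [hsum]
  exact Finset.sum_induction _ (ConvexOn ℝ univ) (fun _ _ => ConvexOn.add)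
    (convexOn_const 0 convex_univ) fun e _ => convexOn_abs_im_conj_mul_sub (e - c) c

theorem secondDiff_crossSum (c : ℂ) (T : Finset ℂ) (z w : ℂ) : secondDiff (crossSum c T) z w =
    ∑ e ∈ T, secondDiff (fun y => |(conj (e - c) * (y - c)).im|) z w := by
  simp only [secondDiff, crossSum, smul_eq_mul, Finset.sum_sub_distrib, Finset.sum_add_distrib,
    Finset.mul_sum]

theorem secondDiff_abs_im_conj_mul_sub (hz : z ∈ segment ℝ c e) (w : ℂ) :
    secondDiff (fun y => |(conj (e - c) * (y - c)).im|) z w = 2 * |(conj (e - c) * w).im| := by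
  have hzero : (conj (e - c) * (z - c)).im = 0 := by
    rw [segment_eq_image'] at hz
    obtain ⟨θ, -, rfl⟩ := hz
    rw [add_sub_cancel_left, mul_smul_comm, smul_im, mul_comm, mul_conj, ofReal_im, smul_zero]
  simp only [secondDiff, add_sub_right_comm, sub_right_comm z w c, mul_add, mul_sub _ (z - c),
    add_im, sub_im _ (_ * w), hzero, zero_add, zero_sub, abs_neg, abs_zero, smul_zero, sub_zero,
    two_mul]

theorem hasKinkAt_crossSum (hz : z ∈ convexJoin ℝ {c} (T : Set ℂ) \ insert c T) :
    HasKinkAt (crossSum c T) (I * (z - c)) z := by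
  obtain ⟨e, heT, hze⟩ := mem_convexJoin_singleton_finset.1 hz.1
  have hc : z ≠ c := fun h => hz.2 (.inl h)
  obtain ⟨θ, ⟨hθ, -⟩, hzθ⟩ :=
    exists_sub_eq_smul_of_mem_segment hze hc fun h => hz.2 (.inr (h ▸ heT))
  have hne : e - c ≠ 0 := right_ne_zero_of_smul (hzθ ▸ sub_ne_zero.2 hc)
  refine ⟨2 * (θ * normSq (e - c)), by have := normSq_pos.2 hne; positivity, fun t ht => ?_⟩
  have hcross : (conj (e - c) * (t • (I * (z - c)))).im = t * (θ * normSq (e - c)) := by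
    rw [hzθ, show conj (e - c) * (t • (I * θ • (e - c))) =
      ((t * (θ * normSq (e - c)) : ℝ) : ℂ) * I by
        simp only [real_smul, ofReal_mul, normSq_eq_conj_mul_self]; ring]
    simp
  calc 2 * (θ * normSq (e - c)) * t
      = secondDiff (fun y => |(conj (e - c) * (y - c)).im|) z (t • (I * (z - c))) := by
        rw [secondDiff_abs_im_conj_mul_sub hze, hcross, abs_of_nonneg
          (by have := normSq_nonneg (e - c); positivity)]
        ring
    _ ≤ secondDiff (crossSum c T) z (t • (I * (z - c))) := by
        rw [secondDiff_crossSum]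
        exact Finset.single_le_sum (f := fun e => secondDiff (fun y =>
          |(conj (e - c) * (y - c)).im|) z (t • (I * (z - c)))) (fun e _ =>
            secondDiff_nonneg_of_convexOn (convexOn_abs_im_conj_mul_sub (e - c) c) z _) heT

end Star

section NormSqExtension

open InnerProductSpace

variable {E : Type*} [NormedAddCommGroup E] {u : ℂ → E} {c z : ℂ} {T : Finset ℂ}

/-- The extension of `‖u‖²` to the segments issuing from `c` by its limit along the normal. It is
`‖u z‖²` wherever `u` is continuous, and a junk value wherever the limit does not exist. -/
noncomputable def normSqExtension (u : ℂ → E) (c z : ℂ) : ℝ :=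
  limUnder (𝓝[≠] (0 : ℝ)) fun t => ‖u (z + t • (I * (z - c)))‖ ^ 2

theorem normSqExtension_of_continuousAt (c : ℂ) (hu : ContinuousAt u z) :
    normSqExtension u c z = ‖u z‖ ^ 2 := by
  have hline : Tendsto (fun t : ℝ => z + t • (I * (z - c))) (𝓝[≠] 0) (𝓝 z) :=
    (Continuous.tendsto' (by fun_prop) 0 z (by simp)).mono_left nhdsWithin_le_nhds
  exact ((hu.tendsto.comp hline).norm.pow 2).limUnder_eq

variable [InnerProductSpace ℝ E]

/-- `u` is harmonic off the segments joining `c` to the points of `T`, and at every point `z` of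
the segments other than `c` and the points of `T` it has an isometric jump along the normal through
`z`, parametrized with speed `‖z - c‖`. -/
structure IsHarmonicWithIsometricJumps (u : ℂ → E) (c : ℂ) (T : Finset ℂ) : Prop where
  harmonicOnNhd : HarmonicOnNhd u (convexJoin ℝ {c} (T : Set ℂ))ᶜ
  hasIsometricJump : ∀ z ∈ convexJoin ℝ {c} (T : Set ℂ) \ insert c T,
    HasIsometricJump fun t : ℝ => u (z + t • (I * (z - c)))

namespace IsHarmonicWithIsometricJumps

theorem normSqExtension_eq (hu : IsHarmonicWithIsometricJumps u c T)
    (hz : z ∈ (convexJoin ℝ {c} (T : Set ℂ))ᶜ) : normSqExtension u c z = ‖u z‖ ^ 2 :=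
  normSqExtension_of_continuousAt c (hu.harmonicOnNhd z hz).1.continuousAt

theorem norm_sq_eventuallyEq_normSqExtension (hu : IsHarmonicWithIsometricJumps u c T)
    (hz : z ∈ (convexJoin ℝ {c} (T : Set ℂ))ᶜ) :
    (fun y => ‖u y‖ ^ 2) =ᶠ[𝓝 z] normSqExtension u c := by
  filter_upwards [(isClosed_convexJoin_singleton_finset c T).isOpen_compl.mem_nhds hz] with y hy
  exact (hu.normSqExtension_eq hy).symm

theorem continuousAt_normSqExtension (hu : IsHarmonicWithIsometricJumps u c T)
    (hz : z ∈ (convexJoin ℝ {c} (T : Set ℂ))ᶜ) : ContinuousAt (normSqExtension u c) z :=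
  ((hu.harmonicOnNhd z hz).1.continuousAt.norm.pow 2).congr
    (hu.norm_sq_eventuallyEq_normSqExtension hz)

theorem asympSubharmonicAt_normSqExtension (hu : IsHarmonicWithIsometricJumps u c T)
    (hz : z ∈ (convexJoin ℝ {c} (T : Set ℂ))ᶜ) : AsympSubharmonicAt (normSqExtension u c) z :=
  (asympSubharmonicAt_norm_sq (hu.harmonicOnNhd z hz)).congr
    (hu.norm_sq_eventuallyEq_normSqExtension hz)

theorem tendsto_normSqExtension (hu : IsHarmonicWithIsometricJumps u c T)
    (hz : z ∈ convexJoin ℝ {c} (T : Set ℂ) \ insert c T) :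
    Tendsto (fun t : ℝ => ‖u (z + t • (I * (z - c)))‖ ^ 2) (𝓝[≠] 0)
      (𝓝 (normSqExtension u c z)) :=
  tendsto_nhds_limUnder (hu.hasIsometricJump z hz).exists_tendsto_norm_sq

theorem normSqExtension_le (hu : IsHarmonicWithIsometricJumps u c T)
    (hz : z ∉ insert c (T : Set ℂ)) {B : ℝ}
    (hB : ∀ᶠ y in 𝓝[(convexJoin ℝ {c} (T : Set ℂ))ᶜ] z, ‖u y‖ ^ 2 ≤ B) :
    normSqExtension u c z ≤ B := by
  by_cases hzΓ : z ∈ convexJoin ℝ {c} (T : Set ℂ)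
  · exact le_of_tendsto (hu.tendsto_normSqExtension ⟨hzΓ, hz⟩)
      ((tendsto_add_smul_I_mul_sub ⟨hzΓ, hz⟩).eventually hB)
  · rw [hu.normSqExtension_eq hzΓ]
    exact hB.self_of_nhdsWithin hzΓ

theorem differentiableAt_normSqExtension (hu : IsHarmonicWithIsometricJumps u c T)
    (hz : z ∈ convexJoin ℝ {c} (T : Set ℂ) \ insert c T) :
    DifferentiableAt ℝ (fun t : ℝ => normSqExtension u c (z + t • (I * (z - c)))) 0 := by
  have hmem : ∀ᶠ t : ℝ in 𝓝[≠] 0,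
      z + t • (I * (z - c)) ∈ (convexJoin ℝ {c} (T : Set ℂ))ᶜ :=
    (tendsto_add_smul_I_mul_sub hz).eventually self_mem_nhdsWithin
  refine (hu.hasIsometricJump z hz).differentiableAt_norm_sq_extension
    (hmem.mono fun t ht => ?_) (hmem.mono fun t ht => hu.normSqExtension_eq ht)
    (by simpa using hu.tendsto_normSqExtension hz)
  exact ((hu.harmonicOnNhd _ ht).1.differentiableAt (by norm_num)).comp t (by fun_prop)

theorem subharmonicAcrossAt_normSqExtension (hu : IsHarmonicWithIsometricJumps u c T)
    (hz : z ∉ insert c (T : Set ℂ)) :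
    SubharmonicAcrossAt (normSqExtension u c) (crossSum c T) z := by
  by_cases hzΓ : z ∈ convexJoin ℝ {c} (T : Set ℂ)
  · exact .inr ⟨_, hasKinkAt_crossSum ⟨hzΓ, hz⟩, hu.differentiableAt_normSqExtension ⟨hzΓ, hz⟩⟩
  · exact .inl (hu.asympSubharmonicAt_normSqExtension hzΓ)

theorem exists_isTransverselySubharmonicOn_normSqExtension (hu : IsHarmonicWithIsometricJumps u c T)
    (hz : z ∈ convexJoin ℝ {c} (T : Set ℂ) \ insert c T) : ∃ D, IsOpen D ∧ (0 : ℂ) ∈ D ∧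
      (∀ w ∈ D, z + w * (z - c) ∉ insert c (T : Set ℂ)) ∧
      IsTransverselySubharmonicOn (fun w => normSqExtension u c (z + w * (z - c))) D := by
  obtain ⟨D, hD, hDo, h0⟩ := mem_nhds_iff.1 (eventually_mem_convexJoin_iff_im_eq_zero hz)
  refine ⟨D, hDo, h0, fun w hw => (hD hw).1, fun w hw him => ?_, fun w hw him => ?_,
    fun x hx => ?_⟩
  · exact ContinuousAt.comp (g := normSqExtension u c)
      (hu.continuousAt_normSqExtension fun hmem => him ((hD hw).2.1 hmem)) (by fun_prop)
  · exact (hu.asympSubharmonicAt_normSqExtension fun hmem => him ((hD hw).2.1 hmem)).comp_add_mul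
  · have hmem : z + x * (z - c) ∈ convexJoin ℝ {c} (T : Set ℂ) \ insert c T :=
      ⟨(hD hx).2.2 (ofReal_im x), (hD hx).1⟩
    have hx1 : (1 + x : ℂ) ≠ 0 := by
      intro h
      refine (hD hx).1 (.inl ?_)
      linear_combination (z - c) * h
    have hscale (t : ℝ) : z + (x + t * I) * (z - c) =
        z + x * (z - c) + (t / (1 + x)) • (I * (z + x * (z - c) - c)) := by
      rw [real_smul]
      push_cast
      field_simp
      ring
    simp only [hscale]
    exact DifferentiableAt.comp (g := fun t : ℝ => normSqExtension u c
      (z + x * (z - c) + t • (I * (z + x * (z - c) - c)))) 0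
      (by simpa using hu.differentiableAt_normSqExtension hmem) (by fun_prop)

theorem bddAbove_normSqExtension (hu : IsHarmonicWithIsometricJumps u c T)
    (hbdd : ∃ B, ∀ z ∈ (convexJoin ℝ {c} (T : Set ℂ))ᶜ, ‖u z‖ ≤ B) :
    BddAbove (normSqExtension u c '' (insert c (T : Set ℂ))ᶜ) := by
  obtain ⟨B, hB⟩ := hbdd
  refine ⟨B ^ 2, forall_mem_image.2 fun z hz => hu.normSqExtension_le hz ?_⟩
  filter_upwards [self_mem_nhdsWithin] with y hy using pow_le_pow_left₀ (norm_nonneg _) (hB y hy) 2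

theorem upperSemicontinuousOn_normSqExtension (hu : IsHarmonicWithIsometricJumps u c T)
    (hbdd : ∃ B, ∀ z ∈ (convexJoin ℝ {c} (T : Set ℂ))ᶜ, ‖u z‖ ≤ B) :
    UpperSemicontinuousOn (normSqExtension u c) (insert c (T : Set ℂ))ᶜ := by
  intro z hz
  refine UpperSemicontinuousAt.upperSemicontinuousWithinAt _ ?_
  by_cases hzΓ : z ∈ convexJoin ℝ {c} (T : Set ℂ)
  · obtain ⟨D, hD, h0, hDP, hF⟩ := hu.exists_isTransverselySubharmonicOn_normSqExtension ⟨hzΓ, hz⟩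
    have hFbdd : BddAbove ((fun w => normSqExtension u c (z + w * (z - c))) '' D) :=
      (hu.bddAbove_normSqExtension hbdd).mono
        (image_subset_iff.2 fun w hw => mem_image_of_mem _ (hDP w hw))
    have hflat := hF.upperSemicontinuousAt hD hFbdd (x := 0) (by simpa using h0)
    have hzc : z - c ≠ 0 := sub_ne_zero.2 fun h => hz (.inl h)
    have hinv : (fun y => normSqExtension u c (z + (y - z) / (z - c) * (z - c))) =
        normSqExtension u c := funext fun y => by rw [div_mul_cancel₀ _ hzc, add_sub_cancel]
    rw [← hinv]
    have hcoord : ContinuousAt (fun y => (y - z) / (z - c)) z := by fun_prop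
    have hflat' : UpperSemicontinuousAt (fun w => normSqExtension u c (z + w * (z - c)))
        ((z - z) / (z - c)) := by simpa using hflat
    exact UpperSemicontinuousAt.comp (f := fun w => normSqExtension u c (z + w * (z - c)))
      (g := fun y => (y - z) / (z - c)) (c := z) hflat' hcoord
  · exact (hu.continuousAt_normSqExtension hzΓ).upperSemicontinuousAt

end IsHarmonicWithIsometricJumps

end NormSqExtension

section General

open InnerProductSpace

variable {E : Type*} [NormedAddCommGroup E] [InnerProductSpace ℝ E] {u : ℂ → E} {c p z : ℂ}
  {T : Finset ℂ}

theorem IsHarmonicWithIsometricJumps.eq_zero_of_notMem_insert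
    (hu : IsHarmonicWithIsometricJumps u c T)
    (hbdd : ∃ B, ∀ z ∈ (convexJoin ℝ {c} (T : Set ℂ))ᶜ, ‖u z‖ ≤ B)
    (hvanish : Tendsto u (𝓝[(convexJoin ℝ {c} (T : Set ℂ))ᶜ] p) (𝓝 0))
    (hz : z ∈ (convexJoin ℝ {c} (T : Set ℂ))ᶜ) (hzP : z ∉ insert c (T : Set ℂ)) : u z = 0 := by
  have hp (ε : ℝ) (hε : 0 < ε) :
      ∀ᶠ y in 𝓝[(insert c (T : Set ℂ))ᶜ] p, normSqExtension u c y ≤ ε := by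
    have hsmall : ∀ᶠ x in 𝓝[(convexJoin ℝ {c} (T : Set ℂ))ᶜ] p, ‖u x‖ ^ 2 ≤ ε :=
      (show Tendsto (fun x => ‖u x‖ ^ 2) _ (𝓝 0) by simpa using hvanish.norm.pow 2)
        |>.eventually_le_const hε
    filter_upwards [mem_nhdsWithin_of_mem_nhds (eventually_eventually_nhds.2
      (eventually_nhdsWithin_iff.1 hsmall)), self_mem_nhdsWithin] with y hy hyP
    exact hu.normSqExtension_le hyP (eventually_nhdsWithin_iff.2 hy)
  have hle : normSqExtension u c z ≤ 0 :=
    nonpos_of_subharmonicAcross_off_finite (T.finite_toSet.insert c) (convexOn_crossSum c T)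
      (hu.upperSemicontinuousOn_normSqExtension hbdd) (hu.bddAbove_normSqExtension hbdd)
      (fun y hy => hu.subharmonicAcrossAt_normSqExtension hy) hp hzP
  rw [hu.normSqExtension_eq hz] at hle
  simpa using hle.antisymm (sq_nonneg _)

theorem isHarmonicWithIsometricJumps_of_forall_segment
    (hharm : HarmonicOnNhd u (convexJoin ℝ {c} (T : Set ℂ))ᶜ)
    (hmatch : ∀ e ∈ T, ∀ z ∈ segment ℝ c e \ insert c T,
      HasIsometricJump fun t : ℝ => u (z + t • (I * (e - c)))) :
    IsHarmonicWithIsometricJumps u c T where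
  harmonicOnNhd := hharm
  hasIsometricJump z hz := by
    obtain ⟨e, heT, hze⟩ := mem_convexJoin_singleton_finset.1 hz.1
    obtain ⟨θ, ⟨hθ, -⟩, hzθ⟩ := exists_sub_eq_smul_of_mem_segment hze
      (fun h => hz.2 (.inl h)) fun h => hz.2 (.inr (h ▸ heT))
    simpa only [hzθ, mul_smul_comm, smul_smul, mul_comm θ] using
      (hmatch e heT z ⟨hze, hz.2⟩).comp_mul_left hθ

theorem no_bounded_harmonic_with_matching_general {Γ : Set ℂ}
    (hΓ : Γ = convexJoin ℝ {c} (T : Set ℂ)) (hharm : HarmonicOnNhd u Γᶜ)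
    (hbdd : ∃ B, ∀ z ∈ Γᶜ, ‖u z‖ ≤ B) (hvanish : Tendsto u (𝓝[Γᶜ] p) (𝓝 0))
    (hmatch : ∀ e ∈ T, ∀ z ∈ segment ℝ c e \ insert c T,
      HasIsometricJump fun t : ℝ => u (z + t • (I * (e - c)))) :
    ∀ z ∈ Γᶜ, u z = 0 := by
  subst hΓ
  intro z hz
  have hzero : ∀ᶠ y in 𝓝[≠] z, u y = 0 := by
    filter_upwards [nhdsNE_le_cofinite z (T.finite_toSet.insert c).compl_mem_cofinite,
      mem_nhdsWithin_of_mem_nhds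
        ((isClosed_convexJoin_singleton_finset c T).isOpen_compl.mem_nhds hz)] with y hyP hy
    exact (isHarmonicWithIsometricJumps_of_forall_segment hharm hmatch).eq_zero_of_notMem_insert
      hbdd hvanish hy hyP
  exact tendsto_nhds_unique
    ((hharm z hz).1.continuousAt.tendsto.mono_left nhdsWithin_le_nhds)
    (tendsto_const_nhds.congr' (hzero.mono fun y hy => hy.symm))

end General

section RealPlane

open InnerProductSpace Laplacian

theorem fderiv_fderiv_apply {V F : Type*} [NormedAddCommGroup V] [NormedSpace ℝ V]
    [NormedAddCommGroup F] [NormedSpace ℝ F] {f : V → F} {x : V} (hf : ContDiffAt ℝ 2 f x) (v : V) :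
    fderiv ℝ (fun y => fderiv ℝ f y v) x v = iteratedFDeriv ℝ 2 f x ![v, v] := by
  have hdiff : DifferentiableAt ℝ (fderiv ℝ f) x :=
    (hf.fderiv_right (m := 1) (by norm_num)).differentiableAt one_ne_zero
  simp [iteratedFDeriv_two_apply, fderiv_clm_apply hdiff (differentiableAt_const v)]

theorem laplacian_comp_equivRealProdCLM {F : Type*} [NormedAddCommGroup F] [NormedSpace ℝ F]
    {f : ℝ × ℝ → F} {z : ℂ} (hf : ContDiffAt ℝ 2 f (equivRealProdCLM z)) :
    Δ (f ∘ equivRealProdCLM) z =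
      fderiv ℝ (fun y => fderiv ℝ f y (1, 0)) (equivRealProdCLM z) (1, 0) +
        fderiv ℝ (fun y => fderiv ℝ f y (0, 1)) (equivRealProdCLM z) (0, 1) := by
  have hsecond (v : ℂ) : iteratedFDeriv ℝ 2 (f ∘ equivRealProdCLM) z ![v, v] =
      iteratedFDeriv ℝ 2 f (equivRealProdCLM z) ![equivRealProdCLM v, equivRealProdCLM v] := by
    rw [← iteratedFDerivWithin_univ, ← preimage_univ (f := equivRealProdCLM),
      equivRealProdCLM.iteratedFDerivWithin_comp_right f uniqueDiffOn_univ (mem_univ _),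
      iteratedFDerivWithin_univ]
    simp only [ContinuousMultilinearMap.compContinuousLinearMap_apply]
    congr 1
    ext i <;> fin_cases i <;> rfl
  simp only [laplacian_eq_iteratedFDeriv_complexPlane, hsecond, fderiv_fderiv_apply hf]
  simp

variable {u : ℝ × ℝ → ℂ} {S : Set (ℝ × ℝ)}

theorem IsHarmonicOn.harmonicOnNhd_comp_equivRealProdCLM (hu : IsHarmonicOn u S) (hS : IsOpen S) :
    HarmonicOnNhd (u ∘ equivRealProdCLM) (equivRealProdCLM ⁻¹' S) := by
  intro z hz
  have hcont (y : ℂ) (hy : y ∈ equivRealProdCLM ⁻¹' S) : ContDiffAt ℝ 2 u (equivRealProdCLM y) :=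
    hu.1.contDiffAt (hS.mem_nhds hy)
  refine ⟨(hcont z hz).comp z equivRealProdCLM.contDiff.contDiffAt, ?_⟩
  filter_upwards [(hS.preimage equivRealProdCLM.continuous).mem_nhds hz] with y hy
  rw [laplacian_comp_equivRealProdCLM (hcont y hy)]
  exact hu.2 _ hy

theorem equivRealProdCLM_add_smul_I_mul (z v : ℂ) (t : ℝ) :
    equivRealProdCLM (z + t • (I * v)) = equivRealProdCLM z + t • rot90 (equivRealProdCLM v) := by
  simp [rot90]

theorem preimage_segment_equivRealProdCLM (a b : ℝ × ℝ) : equivRealProdCLM ⁻¹' segment ℝ a b =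
    segment ℝ (equivRealProdCLM.symm a) (equivRealProdCLM.symm b) := by
  rw [← ContinuousLinearEquiv.image_symm_eq_preimage]
  exact image_segment ℝ equivRealProdCLM.symm.toLinearEquiv.toLinearMap.toAffineMap a b

theorem preimage_biUnion_segment_equivRealProdCLM {ι : Type*} (K : Finset ι) (a : ℝ × ℝ)
    (s : ι → ℝ × ℝ) : equivRealProdCLM ⁻¹' ⋃ k ∈ K, segment ℝ a (s k) =
      convexJoin ℝ {equivRealProdCLM.symm a} (K.image (equivRealProdCLM.symm ∘ s) : Set ℂ) := by
  simp [convexJoin_singleton_left, preimage_segment_equivRealProdCLM]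

theorem tendsto_equivRealProdCLM_nhdsWithin (S : Set (ℝ × ℝ)) (x : ℝ × ℝ) :
    Tendsto equivRealProdCLM (𝓝[equivRealProdCLM ⁻¹' S] (equivRealProdCLM.symm x)) (𝓝[S] x) := by
  have h := equivRealProdCLM.continuous.continuousWithinAt.tendsto_nhdsWithin
    (x := equivRealProdCLM.symm x) (mapsTo_preimage equivRealProdCLM S)
  rwa [equivRealProdCLM.apply_symm_apply] at h

theorem insert_image_erase {ι α : Type*} [Fintype ι] [DecidableEq ι] [DecidableEq α] (f : ι → α)
    (i : ι) : insert (f i) ((Finset.univ.erase i).image f : Set α) = range f := by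
  rw [← Finset.coe_insert, ← Finset.image_insert, Finset.insert_erase (Finset.mem_univ i)]
  simp

theorem isClosed_biUnion_segment {ι : Type*} (K : Finset ι) (a : ℝ × ℝ) (s : ι → ℝ × ℝ) :
    IsClosed (⋃ k ∈ K, segment ℝ a (s k)) :=
  K.finite_toSet.isClosed_biUnion fun k _ => isClosed_segment a (s k)

end RealPlane

theorem no_bounded_harmonic_with_matching
    (n : ℕ) (hn : 1 ≤ n) (s : Fin (n + 1) → ℝ × ℝ)
    (Gam : Set (ℝ × ℝ)) (hGam : Gam = ⋃ k ∈ {k : Fin (n + 1) | k ≠ 0}, segment ℝ (s 0) (s k))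
    (u : ℝ × ℝ → ℂ)
    (hharm : IsHarmonicOn u Gamᶜ)
    (hbdd : ∃ B, ∀ x ∈ Gamᶜ, ‖u x‖ ≤ B)
    -- vanishing at the endpoints s_k
    (hvanish : ∀ k : Fin (n + 1), Tendsto u (nhdsWithin (s k) Gamᶜ) (nhds 0))
    -- matching conditions across each segment, with flux constants α̃
    (α : ℝ × ℝ → ℝ)
    (hmatch : ∀ k : Fin (n + 1), k ≠ 0 → ∀ z ∈ segment ℝ (s 0) (s k) \ Set.range s,
      (∃ a b : ℂ,
        Tendsto (fun t : ℝ => u (z + t • rot90 (s k - s 0))) (nhdsWithin 0 (Set.Ioi 0)) (nhds a) ∧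
        Tendsto (fun t : ℝ => u (z + t • rot90 (s k - s 0))) (nhdsWithin 0 (Set.Iio 0)) (nhds b) ∧
        a = Complex.exp (-2 * π * Complex.I * (α z : ℂ)) * b) ∧
      (∃ da db : ℂ,
        Tendsto (fun t : ℝ => deriv (fun t' : ℝ => u (z + t' • rot90 (s k - s 0))) t)
          (nhdsWithin 0 (Set.Ioi 0)) (nhds da) ∧
        Tendsto (fun t : ℝ => deriv (fun t' : ℝ => u (z + t' • rot90 (s k - s 0))) t)
          (nhdsWithin 0 (Set.Iio 0)) (nhds db) ∧
        da = Complex.exp (-2 * π * Complex.I * (α z : ℂ)) * db)) :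
    ∀ x ∈ Gamᶜ, u x = 0 := by
  have hne : {k : Fin (n + 1) | k ≠ 0} = (Finset.univ.erase 0 : Finset (Fin (n + 1))) := by
    ext
    simp
  rw [hne] at hGam
  have hopen : IsOpen Gamᶜ := (hGam ▸ isClosed_biUnion_segment _ _ _ : IsClosed Gam).isOpen_compl
  have hΓ := (congrArg _ hGam).trans (preimage_biUnion_segment_equivRealProdCLM _ (s 0) s)
  have hzero := no_bounded_harmonic_with_matching_general hΓ
    (hharm.harmonicOnNhd_comp_equivRealProdCLM hopen) (hbdd.imp fun B hB z hz => hB _ hz)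
    ((hvanish 0).comp (tendsto_equivRealProdCLM_nhdsWithin Gamᶜ (s 0))) fun e he z hz => by
      obtain ⟨k, hk, rfl⟩ := Finset.mem_image.1 he
      rw [← Function.comp_apply (f := equivRealProdCLM.symm), insert_image_erase, range_comp,
        ContinuousLinearEquiv.image_symm_eq_preimage] at hz
      simp only [Function.comp_apply, ← preimage_segment_equivRealProdCLM] at hz
      have hjump := hmatch k (Finset.ne_of_mem_erase hk) (equivRealProdCLM z) hz
      have hphase : ‖cexp (-2 * π * I * α (equivRealProdCLM z))‖ = 1 := by simp [norm_exp]
      simpa only [Function.comp_apply, equivRealProdCLM_add_smul_I_mul, map_sub,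
        equivRealProdCLM.apply_symm_apply] using hasIsometricJump_of_phase hphase hjump.1 hjump.2
  intro x hx
  simpa using hzero (equivRealProdCLM.symm x) (by simpa using hx)
end
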